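/- arXiv:2211.04029 — 13 statements merged into one kernel-verified Lean document; each statement's English description precedes it below -/
import Mathlib

section
/- A finite simple graph G of order p and size q is super edge-magic if and only if there exists a bijection f : V(G) → {1, 2, ..., p} such that the set S = { f(u) + f(v) : uv ∈ E(G) } consists of q consecutive integers. Moreover, in that case f extends to a super edge-magic labeling of G with magic constant k = p + q + s, where s = min(S). -/
/-!
The edge labels of a super edge-magic labeling fill the interval `[p + 1, p + q]`, because the
vertex labels already fill `[1, p]`. On edges, the sum of the endpoint labels and the edge label
add up to `k`, so the order-reversing involution `n ↦ k - n` exchanges edge sums and edge labels.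
It carries `[p + 1, p + q]` onto the `q` consecutive integers `[k - p - q, k - p - 1]`, and
conversely, with `k = p + q + s`, it carries `[s, s + q - 1]` onto `[p + 1, p + q]`.
The two directions are `edgeSum_bijOn_of_labeling` and `exists_labeling_of_edgeSum_bijOn`.
-/

/-- The induced edge label `f u + f v` of an unordered pair. -/
def edgeSum {V : Type*} (f : V → ℕ) : Sym2 V → ℕ :=
  Sym2.lift ⟨fun a b => f a + f b, fun a b => Nat.add_comm (f a) (f b)⟩

/-- Extending a vertex labeling `f` by the edge labels `p + q + s - edgeSum f e`. -/
theorem exists_labeling_of_edgeSum_bijOn {V : Type*} [Fintype V] (G : SimpleGraph V) (p q : ℕ)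
    (hq : q = G.edgeSet.ncard) (f : V → ℕ) (s : ℕ)
    (hf : Set.BijOn f Set.univ (Set.Icc 1 p))
    (hS : Set.BijOn (edgeSum f) G.edgeSet (Set.Icc s (s + q - 1))) :
    ∃ F : V ⊕ G.edgeSet → ℕ,
      (∀ u : V, F (Sum.inl u) = f u) ∧
      Set.BijOn F Set.univ (Set.Icc 1 (p + q)) ∧
      (∀ u v : V, ∀ h : G.Adj u v,
        F (Sum.inl u) + F (Sum.inl v) + F (Sum.inr ⟨s(u, v), G.mem_edgeSet.mpr h⟩)
          = p + q + s) := by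
  have hv : ∀ u, 1 ≤ f u ∧ f u ≤ p := fun u => hf.mapsTo (Set.mem_univ u)
  have he : ∀ e ∈ G.edgeSet, s ≤ edgeSum f e ∧ edgeSum f e < s + q := by
    intro e hmem
    -- An edge forces `0 < q`, so the subtraction in `s + q - 1` does not truncate.
    have hpos : 0 < q := hq ▸ (Set.ncard_pos (Set.toFinite _)).2 ⟨e, hmem⟩
    have h := hS.mapsTo hmem
    rw [Set.mem_Icc] at h
    omega
  refine ⟨Sum.elim f fun e => p + q + s - edgeSum f e, fun _ => rfl, ⟨?_, ?_, ?_⟩, ?_⟩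
  · rintro (u | ⟨e, hmem⟩) -
    · have := hv u
      simp only [Sum.elim_inl, Set.mem_Icc]
      omega
    · have := he e hmem
      simp only [Sum.elim_inr, Set.mem_Icc]
      omega
  · rintro (u | ⟨e, hmem⟩) - (v | ⟨e', hmem'⟩) - h <;>
      simp only [Sum.elim_inl, Sum.elim_inr] at h
    · exact congrArg _ (hf.injOn (Set.mem_univ _) (Set.mem_univ _) h)
    · have := hv u
      have := he e' hmem'
      omega
    · have := hv v
      have := he e hmem
      omega
    · have := he e hmem
      have := he e' hmem'
      obtain rfl : e = e' := hS.injOn hmem hmem' (by omega)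
      rfl
  · intro n hn
    rw [Set.mem_Icc] at hn
    by_cases hnp : n ≤ p
    · obtain ⟨u, -, hu⟩ := hf.surjOn (Set.mem_Icc.2 ⟨hn.1, hnp⟩)
      exact ⟨Sum.inl u, Set.mem_univ _, hu⟩
    · have hmem : p + q + s - n ∈ Set.Icc s (s + q - 1) := by
        rw [Set.mem_Icc]
        omega
      obtain ⟨e, hemem, hval⟩ := hS.surjOn hmem
      refine ⟨Sum.inr ⟨e, hemem⟩, Set.mem_univ _, ?_⟩
      simp only [Sum.elim_inr]
      omega
  · intro u v h
    have h1 := he s(u, v) (G.mem_edgeSet.mpr h)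
    have h2 : edgeSum f s(u, v) = f u + f v := rfl
    simp only [Sum.elim_inl, Sum.elim_inr]
    omega

/-- The vertex part of a super edge-magic labeling has consecutive edge sums. -/
theorem edgeSum_bijOn_of_labeling {V : Type*} [Fintype V] (G : SimpleGraph V) (p q k : ℕ)
    (hq : q = G.edgeSet.ncard) (F : V ⊕ G.edgeSet → ℕ)
    (hF : Set.BijOn F Set.univ (Set.Icc 1 (p + q)))
    (hk : ∀ u v : V, ∀ h : G.Adj u v,
      F (Sum.inl u) + F (Sum.inl v) + F (Sum.inr ⟨s(u, v), G.mem_edgeSet.mpr h⟩) = k)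
    (hV : (Set.range fun u : V => F (Sum.inl u)) = Set.Icc 1 p) :
    Set.BijOn (fun u => F (Sum.inl u)) Set.univ (Set.Icc 1 p) ∧
      ∃ c : ℕ, Set.BijOn (edgeSum fun u => F (Sum.inl u)) G.edgeSet
        (Set.Icc c (c + q - 1)) := by
  have hinj : ∀ x y, F x = F y → x = y :=
    fun x y h => hF.injOn (Set.mem_univ _) (Set.mem_univ _) h
  refine ⟨⟨fun u _ => hV ▸ Set.mem_range_self u,
    fun u _ v _ h => Sum.inl_injective (hinj _ _ h),
    fun n hn => ?_⟩, ?_⟩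
  · rw [← hV] at hn
    obtain ⟨u, hu⟩ := hn
    exact ⟨u, Set.mem_univ _, hu⟩
  have hsum : ∀ e (he : e ∈ G.edgeSet),
      edgeSum (fun u => F (Sum.inl u)) e + F (Sum.inr ⟨e, he⟩) = k := by
    intro e
    induction e with
    | _ u v => exact fun he => hk u v (G.mem_edgeSet.mp he)
  have hlab : ∀ e (he : e ∈ G.edgeSet),
      p < F (Sum.inr ⟨e, he⟩) ∧ F (Sum.inr ⟨e, he⟩) ≤ p + q := by
    intro e he
    have h := hF.mapsTo (Set.mem_univ (Sum.inr ⟨e, he⟩))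
    rw [Set.mem_Icc] at h
    refine ⟨?_, h.2⟩
    by_contra! hle
    have hmem : F (Sum.inr ⟨e, he⟩) ∈ Set.Icc 1 p := ⟨h.1, hle⟩
    rw [← hV] at hmem
    obtain ⟨u, hu⟩ := hmem
    exact Sum.inl_ne_inr (hinj _ _ hu)
  have hsurj : ∀ n, p < n → n ≤ p + q → ∃ e, ∃ he : e ∈ G.edgeSet, F (Sum.inr ⟨e, he⟩) = n := by
    intro n h1 h2
    obtain ⟨u | ⟨e, he⟩, -, hx⟩ := hF.surjOn (Set.mem_Icc.2 ⟨by omega, h2⟩)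
    · have hmem : F (Sum.inl u) ∈ Set.Icc 1 p := hV ▸ Set.mem_range_self u
      rw [Set.mem_Icc] at hmem
      omega
    · exact ⟨e, he, hx⟩
  rcases Nat.eq_zero_or_pos q with h0 | hpos
  · -- Without edges `c` must be positive, since `Set.Icc 0 (0 + 0 - 1) = {0}` is nonempty.
    have hempty : G.edgeSet = ∅ := (Set.ncard_eq_zero (Set.toFinite _)).1 (hq ▸ h0)
    refine ⟨1, ?_⟩
    generalize (fun u => F (Sum.inl u)) = f
    rw [hempty, h0]
    simp
  · -- The edge labelled `p + q` shows that `k - (p + q)` does not truncate.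
    obtain ⟨e₀, he₀, hval₀⟩ := hsurj (p + q) (by omega) le_rfl
    have hk₀ := hsum e₀ he₀
    refine ⟨k - (p + q), ?_, ?_, ?_⟩
    · intro e he
      have := hsum e he
      have := hlab e he
      rw [Set.mem_Icc]
      omega
    · intro e he e' he' h
      have h1 := hsum e he
      have h2 := hsum e' he'
      have h3 := hinj (Sum.inr ⟨e, he⟩) (Sum.inr ⟨e', he'⟩) (by omega)
      exact congrArg Subtype.val (Sum.inr_injective h3)
    · intro n hn
      rw [Set.mem_Icc] at hn
      obtain ⟨e, he, hval⟩ := hsurj (k - n) (by omega) (by omega)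
      have := hsum e he
      exact ⟨e, he, by omega⟩

/-- A graph `G` of order `p` and size `q` is super edge-magic (i.e. admits a bijection
`F : V ∪ E → [1, p+q]` with constant `F u + F v + F (uv)` on edges and `F(V) = [1,p]`)
if and only if there is a bijection `f : V → [1,p]` whose edge sums form `q` consecutive
integers; moreover, any such `f` extends to a super edge-magic labeling with magic
constant `k = p + q + s` where `s = min S`. -/
theorem super_edge_magic_iff_consecutive_edge_sums
    {V : Type*} [Fintype V] (G : SimpleGraph V) (p q : ℕ)
    (hp : p = Fintype.card V) (hq : q = G.edgeSet.ncard) :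
    ((∃ (F : V ⊕ G.edgeSet → ℕ) (k : ℕ),
        Set.BijOn F Set.univ (Set.Icc 1 (p + q)) ∧
        (∀ u v : V, ∀ h : G.Adj u v,
          F (Sum.inl u) + F (Sum.inl v) + F (Sum.inr ⟨s(u, v), G.mem_edgeSet.mpr h⟩) = k) ∧
        (Set.range fun u : V => F (Sum.inl u)) = Set.Icc 1 p)
      ↔ (∃ f : V → ℕ, Set.BijOn f Set.univ (Set.Icc 1 p) ∧
          ∃ c : ℕ, Set.BijOn (edgeSum f) G.edgeSet (Set.Icc c (c + q - 1))))
    ∧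
    (∀ (f : V → ℕ) (smin : ℕ), Set.BijOn f Set.univ (Set.Icc 1 p) →
      Set.BijOn (edgeSum f) G.edgeSet (Set.Icc smin (smin + q - 1)) →
      ∃ F : V ⊕ G.edgeSet → ℕ,
        (∀ u : V, F (Sum.inl u) = f u) ∧
        Set.BijOn F Set.univ (Set.Icc 1 (p + q)) ∧
        (∀ u v : V, ∀ h : G.Adj u v,
          F (Sum.inl u) + F (Sum.inl v) + F (Sum.inr ⟨s(u, v), G.mem_edgeSet.mpr h⟩)
            = p + q + smin)) := by
  refine ⟨⟨?_, ?_⟩, exists_labeling_of_edgeSum_bijOn G p q hq⟩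
  · rintro ⟨F, k, hF, hk, hV⟩
    exact ⟨_, edgeSum_bijOn_of_labeling G p q k hq F hF hk hV⟩
  · rintro ⟨f, hf, c, hS⟩
    obtain ⟨F, hFf, hF, hk⟩ := exists_labeling_of_edgeSum_bijOn G p q hq f c hf hS
    refine ⟨F, p + q + c, hF, hk, ?_⟩
    simp only [hFf]
    rw [← Set.image_univ]
    exact hf.image_eq
end

section
/- For every integer n ≥ 4, there exists a simple graph G of order n and size ⌈n/2⌉·(⌊n/2⌋ + 1) together with an injective function f from V(G) into the positive integers such that the sums f(u) + f(v) over the edges uv ∈ E(G) are pairwise distinct and form a set of ⌈n/2⌉·(⌊n/2⌋ + 1) consecutive integers. (Consequently the super edge-magic deficiency of G is finite, so l(n) ≥ ⌈n/2⌉·(⌊n/2⌋ + 1) + 1.) -/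
/-- If every integer of an interval of length `q` is a sum of labels of two distinct vertices, then
choosing one such pair per integer gives a graph whose edge sums biject onto the interval. -/
lemma exists_graph_of_cover {V : Type*} (f : V → ℕ) (c q : ℕ) (hq : 0 < q)
    (h : ∀ s ∈ Set.Icc c (c + q - 1), ∃ u v : V, u ≠ v ∧ f u + f v = s) :
    ∃ G : SimpleGraph V, G.edgeSet.ncard = q ∧
      Set.BijOn (edgeSum f) G.edgeSet (Set.Icc c (c + q - 1)) := by
  have h' : ∀ s, ∃ e : Sym2 V, s ∈ Set.Icc c (c + q - 1) → ¬ e.IsDiag ∧ edgeSum f e = s := by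
    intro s
    by_cases hs : s ∈ Set.Icc c (c + q - 1)
    · obtain ⟨u, v, huv, hsum⟩ := h s hs
      exact ⟨s(u, v), fun _ => ⟨by simpa using huv, hsum⟩⟩
    · obtain ⟨u, -⟩ := h c ⟨le_rfl, by omega⟩
      exact ⟨s(u, u), fun hs' => absurd hs' hs⟩
  choose g hg using h'
  have hE : (SimpleGraph.fromEdgeSet (g '' Set.Icc c (c + q - 1))).edgeSet
      = g '' Set.Icc c (c + q - 1) := by
    rw [SimpleGraph.edgeSet_fromEdgeSet]
    refine sdiff_eq_left.mpr (Set.disjoint_left.mpr ?_)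
    rintro _ ⟨s, hs, rfl⟩ hd
    exact (hg s hs).1 (by simpa using hd)
  have hB : Set.BijOn (edgeSum f) (g '' Set.Icc c (c + q - 1)) (Set.Icc c (c + q - 1)) := by
    refine ⟨?_, ?_, ?_⟩
    · rintro _ ⟨s, hs, rfl⟩
      rwa [(hg s hs).2]
    · rintro _ ⟨s, hs, rfl⟩ _ ⟨t, ht, rfl⟩ hst
      rw [(hg s hs).2, (hg t ht).2] at hst
      rw [hst]
    · intro s hs
      exact ⟨g s, ⟨s, hs, rfl⟩, (hg s hs).2⟩
  refine ⟨SimpleGraph.fromEdgeSet (g '' Set.Icc c (c + q - 1)), ?_, ?_⟩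
  · rw [hE, ← hB.injOn.ncard_image, hB.image_eq, ← Finset.coe_Icc, Set.ncard_coe_finset,
      Nat.card_Icc]
    omega
  · rwa [hE]

/-- For `n ≥ 4` there are `n` distinct positive labels whose sums in pairs cover
`⌈n/2⌉·(⌊n/2⌋ + 1)` consecutive integers starting at `3`. -/
lemma exists_labels (n : ℕ) (hn : 4 ≤ n) :
    ∃ f : Fin n → ℕ, Function.Injective f ∧ (∀ v, 0 < f v) ∧
      ∀ s ∈ Set.Icc 3 (3 + ((n + 1) / 2) * (n / 2 + 1) - 1),
        ∃ u v : Fin n, u ≠ v ∧ f u + f v = s := by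
  rcases hn.eq_or_lt with rfl | hn5
  · refine ⟨![1, 2, 3, 5], by decide, by decide, ?_⟩
    rintro s ⟨h1, h2⟩
    norm_num at h2
    interval_cases s <;> decide
  obtain ⟨k, hk⟩ : ∃ k, k = (n + 1) / 2 := ⟨_, rfl⟩
  obtain ⟨h, hh⟩ : ∃ h, h = n / 2 := ⟨_, rfl⟩
  have hkh : n = k + h := by omega
  have hk3 : 3 ≤ k := by omega
  rw [← hk, ← hh]
  clear hk hh
  subst hkh
  refine ⟨fun i => if i.1 < k then i.1 + 1 else k + 2 + k * (i.1 - k), ?_, ?_, ?_⟩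
  · intro i j hij
    dsimp only at hij
    ext
    split_ifs at hij with hi hj hj
    · omega
    · have := Nat.zero_le (k * (j.1 - k))
      omega
    · have := Nat.zero_le (k * (i.1 - k))
      omega
    · have := Nat.eq_of_mul_eq_mul_left (by omega) (Nat.add_left_cancel hij)
      omega
  · intro v
    dsimp only
    split_ifs <;> omega
  · rintro s ⟨h1, h2⟩
    rcases Nat.lt_or_ge s (k + 2) with hs | hs
    -- `s = 1 + (s - 1)`
    · refine ⟨⟨0, by omega⟩, ⟨s - 2, by omega⟩, by simp; omega, ?_⟩
      dsimp only
      rw [if_pos (by omega), if_pos (by omega)]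
      omega
    rcases hs.eq_or_lt with rfl | hs
    -- `k + 2 = 2 + k`, with distinct summands since `k ≥ 3`
    · refine ⟨⟨1, by omega⟩, ⟨k - 1, by omega⟩, by simp; omega, ?_⟩
      dsimp only
      rw [if_pos (by omega), if_pos (by omega)]
      omega
    -- the remainder of `s - (k + 3)` modulo `k` selects the summand from `A`,
    -- the quotient the summand from `B`
    have hlt : (s - (k + 3)) % k < k := Nat.mod_lt _ (by omega)
    have hdiv : (s - (k + 3)) / k < h := by
      rw [Nat.div_lt_iff_lt_mul (by omega), Nat.mul_comm]
      rw [Nat.mul_add] at h2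
      omega
    have hdm := Nat.mod_add_div (s - (k + 3)) k
    generalize (s - (k + 3)) % k = r at hlt hdm
    generalize (s - (k + 3)) / k = t at hdiv hdm
    refine ⟨⟨r, by omega⟩, ⟨k + t, by omega⟩, fun he => ?_, ?_⟩
    · have := Fin.mk.inj_iff.mp he
      omega
    · dsimp only
      rw [if_pos hlt, if_neg (by omega), Nat.add_sub_cancel_left]
      omega

/-- For every integer `n ≥ 4` there is a graph `G` of order `n` and size
`⌈n/2⌉·(⌊n/2⌋ + 1)` together with an injection `f` of its vertices into the positive
integers whose edge sums are pairwise distinct and form `⌈n/2⌉·(⌊n/2⌋ + 1)` consecutive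
integers (hence `μₛ(G) < ∞`, so `l(n) ≥ ⌈n/2⌉·(⌊n/2⌋ + 1) + 1`). -/
theorem exists_graph_finite_deficiency (n : ℕ) (hn : 4 ≤ n) :
    ∃ G : SimpleGraph (Fin n),
      G.edgeSet.ncard = ((n + 1) / 2) * (n / 2 + 1) ∧
      ∃ f : Fin n → ℕ, Function.Injective f ∧ (∀ v, 0 < f v) ∧
        ∃ c : ℕ, Set.BijOn (edgeSum f) G.edgeSet
          (Set.Icc c (c + ((n + 1) / 2) * (n / 2 + 1) - 1)) := by
  obtain ⟨f, hinj, hpos, hcov⟩ := exists_labels n hn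
  obtain ⟨G, hcard, hG⟩ := exists_graph_of_cover f 3 _
    (Nat.mul_pos (by omega) (by omega)) hcov
  exact ⟨G, hcard, f, hinj, hpos, 3, hG⟩
end

section
/- Let n ≥ 7 be an integer and let x₁ < x₂ < ... < xₙ be positive integers forming a weak Sidon set, i.e., the pairwise sums xᵢ + xⱼ with i < j are all distinct. Then xₙ + xₙ₋₁ − x₂ − x₁ + 1 ≥ n² − 5n + 14. -/
/-!
Let `A` be a weak Sidon set of `m` integers with least element `lo`, greatest element `hi` and
`D = hi - lo`. If two different pairs of elements have the same difference, they share an element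
and form a three-term progression `y - d, y, y + d`; and a given `y` is the midpoint of at most one
such progression. So every positive difference can be charged either to its value in `[1, D]` or to
a midpoint, and as `lo` and `hi` are never midpoints, `C(m, 2) ≤ D + (m - 2)`. More precisely
(`WeakSidon.defects_le`), `D - C(m, 2) + m - 2` bounds the number of *defects*: values of `[1, D]`
that are not differences, and interior elements of `A` that are not midpoints.

For `m ≥ 7` this is improved by two (`WeakSidon.span_ge`). If the improved bound fails, there is at
most one defect (none when `m = 7`, `D = 16`). A difference `D - j` with `j` small is the difference
of an element near `hi` and an element near `lo`, so almost every small `j` is a sum `l + r` with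
`lo + l ∈ A` and `hi - r ∈ A`; likewise almost every element near an end must be the midpoint of a
progression lying near that end. Deciding successively for `k = 1, 2, …` whether `lo + k` and
`hi - k` belong to `A`, every branch reaches a violation of the weak Sidon property or too many
defects by `k = 16`. This search of about 300 nodes is the function `refutes`;
`WeakSidon.not_refutes` is its soundness.

Applying the improved bound to `{x₁, …, xₙ}` and to `{x₂, …, xₙ₋₁}` gives the theorem for `n ≥ 9`.
For `n = 7, 8` the inner set has fewer than seven elements and only the basic bound applies to it;
this leaves very few possibilities for the two spans, which are enumerated in `check_seven` and
`check_eight`.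
-/

/-! ### The search on the two ends of the set -/

/-- `S` contains `a < c < d < b` with `a + b = c + d`. -/
def SelfClash (S : Finset ℕ) : Prop :=
  ∃ a ∈ S, ∃ c ∈ S, a < c ∧ ∃ d ∈ S, c < d ∧ c + d - a ∈ S

instance (S : Finset ℕ) : Decidable (SelfClash S) := by unfold SelfClash; infer_instance

/-- For offsets `L` from the least and `R` from the greatest element of a set of span `N`, a pair in
`L` and a pair in `R` have the same difference `b - a`. The three inequalities ensure that the
resulting equation `(lo + b) + (hi - d) = (lo + a) + (hi - c)`, where `d = c + (b - a)`, is a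
nontrivial coincidence of sums of two distinct elements. -/
def CrossClash (N : ℕ) (L R : Finset ℕ) : Prop :=
  ∃ a ∈ L, ∃ b ∈ L, a < b ∧ ∃ c ∈ R, c + (b - a) ∈ R ∧
    b + (c + (b - a)) ≠ N ∧ b + c ≠ N ∧ a + c ≠ N

instance (N : ℕ) (L R : Finset ℕ) : Decidable (CrossClash N L R) := by
  unfold CrossClash; infer_instance

/-- The `j ≤ k` (with `j < N`) that are not of the form `l + r`, so that `span - j` is not a
difference. -/
def missedBy (N k : ℕ) (L R : Finset ℕ) : Finset ℕ :=
  (Finset.Icc 1 k).filter fun j => j < N ∧ ∀ l ∈ L, ∀ r ∈ R, l + r ≠ j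

/-- The nonzero `y ∈ S` that are not midpoints of a three-term progression in `S`. Only `y` with
`2 * y ≤ k` are considered, because `S` records the offsets up to `k`; the condition `2 * y < N`
keeps the two ends of the set apart. -/
def nonMidBy (N k : ℕ) (S : Finset ℕ) : Finset ℕ :=
  S.filter fun y => 0 < y ∧ 2 * y ≤ k ∧ 2 * y < N ∧ ∀ a ∈ S, a < y → 2 * y - a ∉ S

/-- The ends `L`, `R`, known up to offset `k`, cannot belong to a weak Sidon set with at most `B`
defects. -/
def Dead (N B k : ℕ) (L R : Finset ℕ) : Prop :=
  SelfClash L ∨ SelfClash R ∨ CrossClash N L R ∨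
    B < (missedBy N k L R).card + (nonMidBy N k L).card + (nonMidBy N k R).card

instance (N B k : ℕ) (L R : Finset ℕ) : Decidable (Dead N B k L R) := by
  unfold Dead; infer_instance

/-- `refutes N B f k L R`: within `f` further steps, each deciding whether the next offset belongs to
`L` and whether it belongs to `R`, every branch of the search is `Dead`. -/
def refutes (N B : ℕ) : ℕ → ℕ → Finset ℕ → Finset ℕ → Bool
  | 0, k, L, R => decide (Dead N B k L R)
  | f + 1, k, L, R => decide (Dead N B k L R) ||
      (refutes N B f (k + 1) L R && refutes N B f (k + 1) (insert (k + 1) L) R &&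
        refutes N B f (k + 1) L (insert (k + 1) R) &&
        refutes N B f (k + 1) (insert (k + 1) L) (insert (k + 1) R))

/-- `17`, `22`, `23`, `29`, `30` are the spans allowing exactly one defect for `m = 7`, and zero or
one defect for `m = 8, 9`; `33` stands for all spans larger than `32`. -/
theorem refutes_one : ∀ N ∈ [17, 22, 23, 29, 30, 33], refutes N 1 16 0 {0} {0} = true := by
  decide +kernel

theorem refutes_zero : refutes 16 0 16 0 {0} {0} = true := by
  decide +kernel

/-! ### The finite enumerations for seven and eight elements -/

/-- Placing `{0, a, b, c, I}` at height `p` strictly between `0` and `D` never gives a weak Sidon set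
in the range of spans `D`, `I` left open for `n = 7`. -/
def OuterClash7 (a b c I : ℕ) : Prop :=
  ∀ D < 20, ∀ p < D - I, 0 < p → 17 < D ∧ D + I ≤ 26 →
    SelfClash {0, p, p + a, p + b, p + c, p + I, D}

instance (a b c I : ℕ) : Decidable (OuterClash7 a b c I) := by
  unfold OuterClash7; infer_instance

theorem check_seven : ∀ I ∈ Finset.Icc 7 8, ∀ c ∈ Finset.range I, ∀ b ∈ Finset.range c,
    ∀ a ∈ Finset.range b, 0 < a →
    SelfClash {0, a, b, c, I} ∨ OuterClash7 a b c I := by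
  decide +kernel

/-- Placing `{0, a, b, c, d, I}` at height `p` strictly between `0` and `D` never gives a weak Sidon
set in the range of spans `D`, `I` left open for `n = 8`. -/
def OuterClash8 (a b c d I : ℕ) : Prop :=
  ∀ D < 26, ∀ p < D - I, 0 < p → 23 < D ∧ D + I ≤ 36 →
    SelfClash {0, p, p + a, p + b, p + c, p + d, p + I, D}

instance (a b c d I : ℕ) : Decidable (OuterClash8 a b c d I) := by
  unfold OuterClash8; infer_instance

theorem check_eight : ∀ I ∈ Finset.Icc 11 12, ∀ d ∈ Finset.range I, ∀ c ∈ Finset.range d,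
    ∀ b ∈ Finset.range c, ∀ a ∈ Finset.range b, 0 < a →
    SelfClash {0, a, b, c, d, I} ∨ OuterClash8 a b c d I := by
  decide +kernel

/-! ### Counting differences -/

/-- Sums of two distinct elements of `A` determine the two elements. -/
def WeakSidon (A : Finset ℤ) : Prop :=
  ∀ a ∈ A, ∀ b ∈ A, ∀ c ∈ A, ∀ d ∈ A, a ≠ b → c ≠ d → a + b = c + d → a = c ∨ a = d

/-- The sign `e` allows offsets to be measured upwards or downwards from `o`. -/
theorem WeakSidon.not_selfClash {A : Finset ℤ} (hA : WeakSidon A) {S : Finset ℕ} {o : ℤ} (e : ℤ)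
    (he : e = 1 ∨ e = -1) (hS : ∀ s ∈ S, o + e * (s : ℤ) ∈ A) : ¬ SelfClash S := by
  rintro ⟨a, ha, c, hc, hac, d, hd, hcd, hb⟩
  have := hA _ (hS _ ha) _ (hS _ hb) _ (hS _ hc) _ (hS _ hd)
  have hcast : ((c + d - a : ℕ) : ℤ) = c + d - a := by omega
  rw [hcast] at this
  rcases he with rfl | rfl <;> omega

/-- `y` is the midpoint of a nontrivial three-term progression whose ends lie in `A`. -/
def IsMid (A : Finset ℤ) (y : ℤ) : Prop := ∃ z ∈ A, y < z ∧ 2 * y - z ∈ A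

instance (A : Finset ℤ) : DecidablePred (IsMid A) := fun _ => by unfold IsMid; infer_instance

/-- The positive differences of `A`. -/
def diffs (A : Finset ℤ) : Finset ℤ :=
  ((A ×ˢ A).filter fun p => p.1 < p.2).image fun p => p.2 - p.1

/-- The values in `[1, D]` that are not differences of `A`. -/
noncomputable def missing (A : Finset ℤ) (D : ℤ) : Finset ℤ := Finset.Icc 1 D \ diffs A

/-- The elements of `A` other than `lo`, `hi` that are not midpoints. -/
def nonMid (A : Finset ℤ) (lo hi : ℤ) : Finset ℤ :=
  A.filter fun y => y ≠ lo ∧ y ≠ hi ∧ ¬ IsMid A y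

theorem two_mul_card_lt_pairs (A : Finset ℤ) :
    2 * ((A ×ˢ A).filter fun p => p.1 < p.2).card + A.card = A.card * A.card := by
  have h1 : ((A ×ˢ A).filter fun p => p.2 < p.1).card
      = ((A ×ˢ A).filter fun p => p.1 < p.2).card := by
    apply Finset.card_bij (fun p _ => (p.2, p.1))
    · intro p hp; simp at hp ⊢; tauto
    · intro p _ q _ h; simp at h; ext <;> simp [h]
    · intro p hp; exact ⟨(p.2, p.1), by simp at hp ⊢; tauto, rfl⟩
  have h2 : ((A ×ˢ A).filter fun p => ¬ p.1 < p.2)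
      = ((A ×ˢ A).filter fun p => p.2 < p.1) ∪ A.diag := by
    ext ⟨a, b⟩
    simp only [Finset.mem_filter, Finset.mem_product, Finset.mem_union, Finset.mem_diag]
    grind
  have h3 : Disjoint ((A ×ˢ A).filter fun p => p.2 < p.1) A.diag := by
    rw [Finset.disjoint_left]
    rintro ⟨a, b⟩ h h'
    simp only [Finset.mem_filter, Finset.mem_diag] at h h'
    omega
  have h4 := Finset.card_filter_add_card_filter_not (s := A ×ˢ A) (fun p => p.1 < p.2)
  rw [h2, Finset.card_union_of_disjoint h3, h1, Finset.diag_card, Finset.card_product] at h4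
  omega

/-- A pair `a < b` is charged to the midpoint `a` if `2 * a - b ∈ A`, and to its difference `b - a`
otherwise; no two pairs share a charge. -/
theorem WeakSidon.card_pairs_le {A : Finset ℤ} (hA : WeakSidon A) :
    ((A ×ˢ A).filter fun p => p.1 < p.2).card ≤ (diffs A).card + (A.filter (IsMid A)).card := by
  rw [← Finset.card_disjSum]
  apply Finset.card_le_card_of_injOn
    (fun p => if 2 * p.1 - p.2 ∈ A then Sum.inr p.1 else Sum.inl (p.2 - p.1))
  · rintro ⟨a, b⟩ hp
    simp only [Finset.coe_filter, Finset.mem_product, Set.mem_ofPred_eq] at hp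
    dsimp only
    split_ifs with h
    · simp only [Finset.mem_coe, Finset.inr_mem_disjSum, Finset.mem_filter]
      exact ⟨hp.1.1, b, hp.1.2, hp.2, h⟩
    · simp only [Finset.mem_coe, Finset.inl_mem_disjSum, diffs, Finset.mem_image]
      exact ⟨(a, b), by simpa using hp, rfl⟩
  · rintro ⟨a, b⟩ hp ⟨c, d⟩ hq h
    simp only [Finset.coe_filter, Finset.mem_product, Set.mem_ofPred_eq] at hp hq
    obtain ⟨⟨ha, hb⟩, hab⟩ := hp
    obtain ⟨⟨hc, hd⟩, hcd⟩ := hq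
    dsimp only at h
    split_ifs at h with h1 h2 h2
    · obtain rfl : a = c := by simpa using h
      have := hA b hb _ h1 d hd _ h2 (by omega) (by omega) (by ring)
      have : b = d := by omega
      rw [this]
    · have h : b - a = d - c := by simpa using h
      have hbc : b ≠ c := by
        rintro rfl
        exact h2 (by rwa [show 2 * b - d = a by omega])
      have hda : d ≠ a := by
        rintro rfl
        exact h1 (by rwa [show 2 * d - b = c by omega])
      have := hA b hb c hc d hd a ha hbc hda (by omega)
      have : b = d ∧ a = c := by omega
      rw [this.1, this.2]

/-- The number of defects is at most `(hi - lo) - C(m, 2) + (m - 2)`, where `m = A.card`. -/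
theorem WeakSidon.defects_le {A : Finset ℤ} (hA : WeakSidon A) {lo hi : ℤ} (hlo : lo ∈ A)
    (hhi : hi ∈ A) (hlt : lo < hi) (hsub : ∀ a ∈ A, lo ≤ a ∧ a ≤ hi) :
    (A.card : ℤ) * A.card + 2 * ((missing A (hi - lo)).card + (nonMid A lo hi).card)
      ≤ 2 * (hi - lo) + 3 * A.card - 4 := by
  have h1 := two_mul_card_lt_pairs A
  have h2 := hA.card_pairs_le
  have h3 : (missing A (hi - lo)).card + (diffs A).card = (hi - lo).toNat := by
    have : diffs A ⊆ Finset.Icc 1 (hi - lo) := by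
      intro t ht
      simp only [diffs, Finset.mem_image, Finset.mem_filter, Finset.mem_product] at ht
      obtain ⟨p, ⟨⟨hp1, hp2⟩, hp⟩, rfl⟩ := ht
      have := hsub _ hp1
      have := hsub _ hp2
      rw [Finset.mem_Icc]
      omega
    rw [missing, Finset.card_sdiff_add_card_eq_card this, Int.card_Icc]
    congr 1; omega
  have h4 : (nonMid A lo hi).card + (A.filter (IsMid A)).card + 2 = A.card := by
    have e : A = insert lo (insert hi (nonMid A lo hi ∪ A.filter (IsMid A))) := by
      ext a
      simp only [nonMid, Finset.mem_insert, Finset.mem_union, Finset.mem_filter]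
      grind
    have n1 : ¬ IsMid A lo := by
      rintro ⟨z, hz, hlz, hz'⟩
      have := hsub _ hz'
      omega
    have n2 : ¬ IsMid A hi := by
      rintro ⟨z, hz, hlz, hz'⟩
      have := hsub _ hz
      omega
    have dj : Disjoint (nonMid A lo hi) (A.filter (IsMid A)) := by
      rw [Finset.disjoint_left]
      intro a h h'
      simp only [nonMid, Finset.mem_filter] at h h'
      exact h.2.2.2 h'.2
    conv_rhs => rw [e]
    rw [Finset.card_insert_of_notMem, Finset.card_insert_of_notMem,
      Finset.card_union_of_disjoint dj]
    · simp [nonMid, n2]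
    · simp [nonMid, n1, hlt.ne]
  zify at h1 h2 h3 h4
  rw [Int.toNat_of_nonneg (by omega)] at h3
  linarith

/-! ### Soundness of the search -/

/-- The offsets `j ≤ k` with `lo + j ∈ A`. -/
def lowEnd (A : Finset ℤ) (lo : ℤ) (k : ℕ) : Finset ℕ :=
  (Finset.range (k + 1)).filter fun j => lo + (j : ℤ) ∈ A

/-- The offsets `j ≤ k` with `hi - j ∈ A`. -/
def highEnd (A : Finset ℤ) (hi : ℤ) (k : ℕ) : Finset ℕ :=
  (Finset.range (k + 1)).filter fun j => hi - (j : ℤ) ∈ A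

theorem mem_lowEnd {A : Finset ℤ} {lo : ℤ} {k j : ℕ} :
    j ∈ lowEnd A lo k ↔ j ≤ k ∧ lo + (j : ℤ) ∈ A := by
  simp [lowEnd]

theorem mem_highEnd {A : Finset ℤ} {hi : ℤ} {k j : ℕ} :
    j ∈ highEnd A hi k ↔ j ≤ k ∧ hi - (j : ℤ) ∈ A := by
  simp [highEnd]

theorem lowEnd_succ (A : Finset ℤ) (lo : ℤ) (k : ℕ) :
    lowEnd A lo (k + 1) = lowEnd A lo k ∨ lowEnd A lo (k + 1) = insert (k + 1) (lowEnd A lo k) := by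
  rw [lowEnd, Finset.range_add_one, Finset.filter_insert]
  split_ifs
  · exact Or.inr rfl
  · exact Or.inl rfl

theorem highEnd_succ (A : Finset ℤ) (hi : ℤ) (k : ℕ) :
    highEnd A hi (k + 1) = highEnd A hi k ∨
      highEnd A hi (k + 1) = insert (k + 1) (highEnd A hi k) := by
  rw [highEnd, Finset.range_add_one, Finset.filter_insert]
  split_ifs
  · exact Or.inr rfl
  · exact Or.inl rfl

section
variable {A : Finset ℤ} {lo hi : ℤ} {N k : ℕ}

theorem card_missedBy_le (hsub : ∀ a ∈ A, lo ≤ a ∧ a ≤ hi) (hN : (N : ℤ) ≤ hi - lo) :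
    (missedBy N k (lowEnd A lo k) (highEnd A hi k)).card ≤ (missing A (hi - lo)).card := by
  apply Finset.card_le_card_of_injOn (fun j : ℕ => hi - lo - (j : ℤ))
  · intro j hj
    simp only [missedBy, Finset.coe_filter, Finset.mem_Icc, Set.mem_ofPred_eq] at hj
    obtain ⟨⟨h1, hk⟩, hjN, hj⟩ := hj
    simp only [missing, Finset.coe_sdiff, Set.mem_sdiff, Finset.mem_coe, Finset.mem_Icc, diffs,
      Finset.mem_image, Finset.mem_filter, Finset.mem_product]
    refine ⟨by omega, ?_⟩
    rintro ⟨⟨a, b⟩, ⟨⟨ha, hb⟩, hab⟩, h⟩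
    dsimp only at ha hb hab h
    have ha' := hsub a ha
    have hb' := hsub b hb
    refine hj (a - lo).toNat (mem_lowEnd.2 ⟨by omega, ?_⟩) (hi - b).toNat
      (mem_highEnd.2 ⟨by omega, ?_⟩) (by omega)
    · rwa [show lo + ((a - lo).toNat : ℤ) = a by omega]
    · rwa [show hi - ((hi - b).toNat : ℤ) = b by omega]
  · intro i _ j _ h
    dsimp only at h
    omega

theorem card_nonMidBy_le (hsub : ∀ a ∈ A, lo ≤ a ∧ a ≤ hi) (hN : (N : ℤ) ≤ hi - lo) :
    (nonMidBy N k (lowEnd A lo k)).card + (nonMidBy N k (highEnd A hi k)).card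
      ≤ (nonMid A lo hi).card := by
  rw [← Finset.card_disjSum]
  apply Finset.card_le_card_of_injOn
    (Sum.elim (fun y : ℕ => lo + (y : ℤ)) (fun y : ℕ => hi - (y : ℤ)))
  · rintro (y | y) hy
    · simp only [Finset.mem_coe, Finset.inl_mem_disjSum, nonMidBy, Finset.mem_filter,
        mem_lowEnd] at hy
      obtain ⟨⟨_, hyA⟩, h0, hyk, hyN, hy⟩ := hy
      simp only [Sum.elim_inl, nonMid, Finset.coe_filter, Set.mem_ofPred_eq]
      refine ⟨hyA, by omega, by omega, ?_⟩
      rintro ⟨z, hz, hyz, hw⟩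
      have := hsub _ hw
      refine hy (2 * y - (z - lo).toNat) ⟨by omega, ?_⟩ (by omega) ⟨by omega, ?_⟩
      · rwa [show lo + ((2 * y - (z - lo).toNat : ℕ) : ℤ) = 2 * (lo + y) - z by omega]
      · rwa [show lo + ((2 * y - (2 * y - (z - lo).toNat) : ℕ) : ℤ) = z by omega]
    · simp only [Finset.mem_coe, Finset.inr_mem_disjSum, nonMidBy, Finset.mem_filter,
        mem_highEnd] at hy
      obtain ⟨⟨_, hyA⟩, h0, hyk, hyN, hy⟩ := hy
      simp only [Sum.elim_inr, nonMid, Finset.coe_filter, Set.mem_ofPred_eq]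
      refine ⟨hyA, by omega, by omega, ?_⟩
      rintro ⟨z, hz, hyz, hw⟩
      have := hsub _ hz
      have := hsub _ hw
      refine hy (hi - z).toNat ⟨by omega, ?_⟩ (by omega) ⟨by omega, ?_⟩
      · rwa [show hi - ((hi - z).toNat : ℤ) = z by omega]
      · rwa [show hi - ((2 * y - (hi - z).toNat : ℕ) : ℤ) = 2 * (hi - y) - z by omega]
  · rintro (i | i) hi' (j | j) hj' h <;>
      simp only [Finset.mem_coe, Finset.inl_mem_disjSum, Finset.inr_mem_disjSum, nonMidBy,
        Finset.mem_filter, Sum.elim_inl, Sum.elim_inr] at hi' hj' h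
    · rw [show i = j by omega]
    · omega
    · omega
    · rw [show i = j by omega]

/-- Offsets up to `16` have sums at most `32`, so for spans larger than `32` any `N` in
`(32, hi - lo]` serves equally well in excluding coincidences between the two ends. -/
theorem WeakSidon.not_crossClash (hA : WeakSidon A) (hk : k ≤ 16)
    (hN : (N : ℤ) = hi - lo ∨ 32 < N ∧ (N : ℤ) ≤ hi - lo) :
    ¬ CrossClash N (lowEnd A lo k) (highEnd A hi k) := by
  rintro ⟨a, ha, b, hb, hab, c, hc, hd, h1, h2, h3⟩
  rw [mem_lowEnd] at ha hb
  rw [mem_highEnd] at hc hd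
  have := hA _ hb.2 _ hd.2 _ ha.2 _ hc.2
  omega

theorem WeakSidon.not_dead (hA : WeakSidon A) (hsub : ∀ a ∈ A, lo ≤ a ∧ a ≤ hi) {B : ℕ}
    (hk : k ≤ 16) (hN : (N : ℤ) = hi - lo ∨ 32 < N ∧ (N : ℤ) ≤ hi - lo)
    (hB : (missing A (hi - lo)).card + (nonMid A lo hi).card ≤ B) :
    ¬ Dead N B k (lowEnd A lo k) (highEnd A hi k) := by
  rintro (h | h | h | h)
  · exact hA.not_selfClash 1 (Or.inl rfl) (fun s hs => by simpa using (mem_lowEnd.1 hs).2) h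
  · refine hA.not_selfClash (o := hi) (-1) (Or.inr rfl) (fun s hs => ?_) h
    simpa [sub_eq_add_neg] using (mem_highEnd.1 hs).2
  · exact hA.not_crossClash hk hN h
  · have h1 := card_missedBy_le (k := k) hsub (show (N : ℤ) ≤ hi - lo by omega)
    have h2 := card_nonMidBy_le (k := k) hsub (show (N : ℤ) ≤ hi - lo by omega)
    omega

theorem WeakSidon.not_refutes (hA : WeakSidon A) (hsub : ∀ a ∈ A, lo ≤ a ∧ a ≤ hi) {B : ℕ}
    (hN : (N : ℤ) = hi - lo ∨ 32 < N ∧ (N : ℤ) ≤ hi - lo)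
    (hB : (missing A (hi - lo)).card + (nonMid A lo hi).card ≤ B) (f k : ℕ) (hk : f + k ≤ 16) :
    refutes N B f k (lowEnd A lo k) (highEnd A hi k) = false := by
  induction f generalizing k with
  | zero => simpa [refutes] using hA.not_dead hsub (by omega) hN hB
  | succ f ih =>
    have hd := hA.not_dead (k := k) hsub (by omega) hN hB
    have := ih (k + 1) (by omega)
    rcases lowEnd_succ A lo k with hl | hl <;> rcases highEnd_succ A hi k with hr | hr <;>
      rw [hl, hr] at this <;> simp [refutes, hd, this]

end

/-! ### Lower bounds for the span -/

/-- `hi - lo ≥ C(m, 2) - m + 4` for `m = A.card ≥ 7`. -/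
theorem WeakSidon.span_ge {A : Finset ℤ} (hA : WeakSidon A) {lo hi : ℤ} (hlo : lo ∈ A)
    (hhi : hi ∈ A) (hlt : lo < hi) (hsub : ∀ a ∈ A, lo ≤ a ∧ a ≤ hi) (hm : 7 ≤ A.card) :
    (A.card : ℤ) * A.card - 3 * A.card + 8 ≤ 2 * (hi - lo) := by
  by_contra! hcon
  have hdef := hA.defects_le hlo hhi hlt hsub
  have hl : lowEnd A lo 0 = {0} := by simp [lowEnd, hlo]
  have hr : highEnd A hi 0 = {0} := by simp [highEnd, hhi]
  have key : ∀ N B : ℕ, refutes N B 16 0 {0} {0} = true →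
      ((N : ℤ) = hi - lo ∨ 32 < N ∧ (N : ℤ) ≤ hi - lo) →
      B < (missing A (hi - lo)).card + (nonMid A lo hi).card := by
    intro N B h hN
    by_contra! hB
    have := hA.not_refutes hsub hN hB 16 0 (by norm_num)
    rw [hl, hr, h] at this
    cases this
  have hone := fun N hN => key N 1 (refutes_one N hN)
  have hzero := key 16 0 refutes_zero
  obtain ⟨m, hmA⟩ : ∃ m, A.card = m := ⟨_, rfl⟩
  rw [hmA] at hdef hcon hm
  have h17 := hone 17 (by simp)
  have h22 := hone 22 (by simp)
  have h23 := hone 23 (by simp)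
  have h29 := hone 29 (by simp)
  have h30 := hone 30 (by simp)
  have h33 := hone 33 (by simp)
  -- for `m ≥ 10` the basic bound already gives `hi - lo ≥ 37`, so that `N = 33` applies
  by_cases hm10 : 10 ≤ m
  · have : (m : ℤ) * m ≥ 10 * m := by nlinarith
    omega
  · interval_cases m <;> omega

/-- `hi - lo ≥ C(m, 2) - m + 2` for `m = A.card`. -/
theorem WeakSidon.span_ge_basic {A : Finset ℤ} (hA : WeakSidon A) {lo hi : ℤ} (hlo : lo ∈ A)
    (hhi : hi ∈ A) (hlt : lo < hi) (hsub : ∀ a ∈ A, lo ≤ a ∧ a ≤ hi) :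
    (A.card : ℤ) * A.card - 3 * A.card + 4 ≤ 2 * (hi - lo) := by
  have := hA.defects_le hlo hhi hlt hsub
  omega

/-- Kotzig's bound: if `x₁ < x₂ < ⋯ < xₙ` (`n ≥ 7`) are positive integers forming a
weak Sidon set (all pairwise sums `xᵢ + xⱼ`, `i < j`, are distinct), then
`xₙ + xₙ₋₁ − x₂ − x₁ + 1 ≥ n² − 5n + 14`. -/
theorem weak_sidon_span_lower_bound (n : ℕ) (hn : 7 ≤ n) (x : Fin n → ℤ)
    (hpos : ∀ i, 0 < x i) (hmono : StrictMono x)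
    (hsidon : ∀ i j k l : Fin n, i < j → k < l → x i + x j = x k + x l → i = k ∧ j = l) :
    x ⟨n - 1, by omega⟩ + x ⟨n - 2, by omega⟩ - x ⟨1, by omega⟩ - x ⟨0, by omega⟩ + 1
      ≥ (n : ℤ) ^ 2 - 5 * n + 14 := by
  have hws : ∀ I : Finset (Fin n), WeakSidon (I.image x) := by
    intro I a ha b hb c hc d hd hab hcd h
    simp only [Finset.mem_image] at ha hb hc hd
    obtain ⟨i, -, rfl⟩ := ha
    obtain ⟨j, -, rfl⟩ := hb
    obtain ⟨k, -, rfl⟩ := hc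
    obtain ⟨l, -, rfl⟩ := hd
    have hij : i ≠ j := fun e => hab (e ▸ rfl)
    have hkl : k ≠ l := fun e => hcd (e ▸ rfl)
    rcases lt_or_gt_of_ne hij with h1 | h1 <;> rcases lt_or_gt_of_ne hkl with h2 | h2
    · exact Or.inl (congrArg x (hsidon i j k l h1 h2 h).1)
    · exact Or.inr (congrArg x (hsidon i j l k h1 h2 (by omega)).1)
    · exact Or.inr (congrArg x (hsidon j i k l h1 h2 (by omega)).2)
    · exact Or.inl (congrArg x (hsidon j i l k h1 h2 (by omega)).2)
  have hcard : ∀ I : Finset (Fin n), (I.image x).card = I.card := fun I =>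
    Finset.card_image_of_injective _ hmono.injective
  let i0 : Fin n := ⟨0, by omega⟩
  let i1 : Fin n := ⟨1, by omega⟩
  let j1 : Fin n := ⟨n - 2, by omega⟩
  let j0 : Fin n := ⟨n - 1, by omega⟩
  have hO : ∀ a ∈ (Finset.univ : Finset (Fin n)).image x, x i0 ≤ a ∧ a ≤ x j0 := by
    intro a ha
    obtain ⟨i, -, rfl⟩ := Finset.mem_image.1 ha
    exact ⟨hmono.monotone (Fin.mk_le_of_le_val (by simp)),
      hmono.monotone (Fin.le_def.2 (by have := i.2; simp only [j0]; omega))⟩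
  have hI : ∀ a ∈ (Finset.Icc i1 j1).image x, x i1 ≤ a ∧ a ≤ x j1 := by
    intro a ha
    obtain ⟨i, hi, rfl⟩ := Finset.mem_image.1 ha
    rw [Finset.mem_Icc] at hi
    exact ⟨hmono.monotone hi.1, hmono.monotone hi.2⟩
  have hij : i1 ≤ j1 := Fin.le_def.2 (by simp only [i1, j1]; omega)
  have hcO : ((Finset.univ : Finset (Fin n)).image x).card = n := by rw [hcard]; simp
  have hcI : ((Finset.Icc i1 j1).image x).card = n - 2 := by
    rw [hcard, Fin.card_Icc]
    simp only [i1, j1]; omega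
  have lt0 : x i0 < x j0 := hmono (Fin.lt_def.2 (by simp only [i0, j0]; omega))
  have lt1 : x i1 < x j1 := hmono (Fin.lt_def.2 (by simp only [i1, j1]; omega))
  have hout := (hws Finset.univ).span_ge (Finset.mem_image_of_mem x (Finset.mem_univ i0))
    (Finset.mem_image_of_mem x (Finset.mem_univ j0)) lt0 hO (by omega)
  have hin' := (hws (Finset.Icc i1 j1)).span_ge_basic
    (Finset.mem_image_of_mem x (Finset.left_mem_Icc.2 hij))
    (Finset.mem_image_of_mem x (Finset.right_mem_Icc.2 hij)) lt1 hI
  rw [hcO] at hout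
  rw [hcI] at hin'
  change x j0 + x j1 - x i1 - x i0 + 1 ≥ _
  have lift : ∀ i j : Fin n, i < j → ∃ t : ℕ, x j = x i + t ∧ 0 < t := fun i j h =>
    ⟨(x j - x i).toNat, by have := hmono h; omega, by have := hmono h; omega⟩
  have clash : ∀ (S : Finset ℕ) (o : ℤ), (∀ s ∈ S, ∃ i, x i = o + (s : ℤ)) → ¬ SelfClash S := by
    intro S o hS
    refine (hws Finset.univ).not_selfClash 1 (Or.inl rfl) (o := o) fun s hs => ?_
    obtain ⟨i, hi⟩ := hS s hs
    rw [one_mul, ← hi]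
    exact Finset.mem_image_of_mem x (Finset.mem_univ i)
  by_contra! hcon
  rcases (by omega : n = 7 ∨ n = 8 ∨ 9 ≤ n) with rfl | rfl | h9
  · obtain ⟨p, hp, p0⟩ := lift 0 1 (by decide)
    obtain ⟨a, ha, a0⟩ := lift 1 2 (by decide)
    obtain ⟨b, hb, b0⟩ := lift 1 3 (by decide)
    obtain ⟨c, hc, c0⟩ := lift 1 4 (by decide)
    obtain ⟨I, hI', I0⟩ := lift 1 5 (by decide)
    obtain ⟨D, hD, D0⟩ := lift 0 6 (by decide)
    have h23 : x 2 < x 3 := hmono (by decide)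
    have h34 : x 3 < x 4 := hmono (by decide)
    have h45 : x 4 < x 5 := hmono (by decide)
    have h56 : x 5 < x 6 := hmono (by decide)
    change 2 * (x 6 - x 0) ≥ _ at hout
    change 2 * (x 5 - x 1) ≥ _ at hin'
    change x 6 + x 5 - x 1 - x 0 + 1 < _ at hcon
    norm_num at hout hin' hcon
    rcases check_seven I (by rw [Finset.mem_Icc]; omega) c (Finset.mem_range.2 (by omega))
      b (Finset.mem_range.2 (by omega)) a (Finset.mem_range.2 (by omega)) a0 with h | h
    · refine clash _ (x 1) (fun s hs => ?_) h
      simp only [Finset.mem_insert, Finset.mem_singleton] at hs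
      rcases hs with rfl | rfl | rfl | rfl | rfl
      exacts [⟨1, by simp⟩, ⟨2, ha⟩, ⟨3, hb⟩, ⟨4, hc⟩, ⟨5, hI'⟩]
    · refine clash _ (x 0) (fun s hs => ?_) (h D (by omega) p (by omega) p0 (by omega))
      simp only [Finset.mem_insert, Finset.mem_singleton] at hs
      rcases hs with rfl | rfl | rfl | rfl | rfl | rfl | rfl
      exacts [⟨0, by simp⟩, ⟨1, hp⟩, ⟨2, by omega⟩, ⟨3, by omega⟩, ⟨4, by omega⟩, ⟨5, by omega⟩,
        ⟨6, hD⟩]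
  · obtain ⟨p, hp, p0⟩ := lift 0 1 (by decide)
    obtain ⟨a, ha, a0⟩ := lift 1 2 (by decide)
    obtain ⟨b, hb, b0⟩ := lift 1 3 (by decide)
    obtain ⟨c, hc, c0⟩ := lift 1 4 (by decide)
    obtain ⟨d, hd, d0⟩ := lift 1 5 (by decide)
    obtain ⟨I, hI', I0⟩ := lift 1 6 (by decide)
    obtain ⟨D, hD, D0⟩ := lift 0 7 (by decide)
    have h23 : x 2 < x 3 := hmono (by decide)
    have h34 : x 3 < x 4 := hmono (by decide)
    have h45 : x 4 < x 5 := hmono (by decide)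
    have h56 : x 5 < x 6 := hmono (by decide)
    have h67 : x 6 < x 7 := hmono (by decide)
    change 2 * (x 7 - x 0) ≥ _ at hout
    change 2 * (x 6 - x 1) ≥ _ at hin'
    change x 7 + x 6 - x 1 - x 0 + 1 < _ at hcon
    norm_num at hout hin' hcon
    rcases check_eight I (by rw [Finset.mem_Icc]; omega) d (Finset.mem_range.2 (by omega))
      c (Finset.mem_range.2 (by omega)) b (Finset.mem_range.2 (by omega))
      a (Finset.mem_range.2 (by omega)) a0 with h | h
    · refine clash _ (x 1) (fun s hs => ?_) h
      simp only [Finset.mem_insert, Finset.mem_singleton] at hs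
      rcases hs with rfl | rfl | rfl | rfl | rfl | rfl
      exacts [⟨1, by simp⟩, ⟨2, ha⟩, ⟨3, hb⟩, ⟨4, hc⟩, ⟨5, hd⟩, ⟨6, hI'⟩]
    · refine clash _ (x 0) (fun s hs => ?_) (h D (by omega) p (by omega) p0 (by omega))
      simp only [Finset.mem_insert, Finset.mem_singleton] at hs
      rcases hs with rfl | rfl | rfl | rfl | rfl | rfl | rfl | rfl
      exacts [⟨0, by simp⟩, ⟨1, hp⟩, ⟨2, by omega⟩, ⟨3, by omega⟩, ⟨4, by omega⟩, ⟨5, by omega⟩,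
        ⟨6, by omega⟩, ⟨7, hD⟩]
  · have hin := (hws (Finset.Icc i1 j1)).span_ge
      (Finset.mem_image_of_mem x (Finset.left_mem_Icc.2 hij))
      (Finset.mem_image_of_mem x (Finset.right_mem_Icc.2 hij)) lt1 hI (by omega)
    rw [hcI] at hin
    push_cast [show 2 ≤ n by omega] at hin
    nlinarith
end

section
/- For every integer n ≥ 7, the graph K_{n+1} − e obtained from the complete graph on n+1 vertices by deleting one edge has infinite super edge-magic deficiency: there is no injective function f from its vertex set into the positive integers such that the sums f(u) + f(v) over its C(n+1,2) − 1 edges are pairwise distinct and form a set of consecutive integers; equivalently, (K_{n+1} − e) ∪ kK₁ is not super edge-magic for any nonnegative integer k. -/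
/-- `x 0 < ⋯ < x (N - 1)` are integers whose sums over pairs `i < j < N` other than `(p, q)` are
pairwise distinct and fill the interval `[c, T]`. Values of `x` from index `N` on are irrelevant. -/
structure NearMagic (N : ℕ) (x : ℕ → ℤ) (p q : ℕ) (c T : ℤ) : Prop where
  lt : p < q
  bd : q < N
  mono : ∀ i j, i < j → j < N → x i < x j
  inj : ∀ i j k l, i < j → j < N → k < l → l < N → ¬ (i = p ∧ j = q) → ¬ (k = p ∧ l = q) →
    x i + x j = x k + x l → i = k ∧ j = l
  mem : ∀ i j, i < j → j < N → ¬ (i = p ∧ j = q) → c ≤ x i + x j ∧ x i + x j ≤ T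
  surj : ∀ s, c ≤ s → s ≤ T → ∃ i j, i < j ∧ j < N ∧ ¬ (i = p ∧ j = q) ∧ x i + x j = s

namespace NearMagic

variable {N : ℕ} {x : ℕ → ℤ} {p q : ℕ} {c T : ℤ}

lemma mono_le (h : NearMagic N x p q c T) (i j : ℕ) (hij : i ≤ j) (hj : j < N) : x i ≤ x j := by
  rcases hij.eq_or_lt with rfl | hlt
  · exact le_rfl
  · exact (h.mono i j hlt hj).le

lemma reflect (h : NearMagic N x p q c T) :
    NearMagic N (fun i => - x (N - 1 - i)) (N - 1 - q) (N - 1 - p) (-T) (-c) := by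
  have h1 := h.lt
  have h2 := h.bd
  refine ⟨by omega, by omega, ?_, ?_, ?_, ?_⟩
  · intro i j hij hj
    have := h.mono (N - 1 - j) (N - 1 - i) (by omega) (by omega)
    simpa using this
  · intro i j k l hij hj hkl hl h3 h4 he
    have := h.inj (N - 1 - j) (N - 1 - i) (N - 1 - l) (N - 1 - k) (by omega) (by omega)
      (by omega) (by omega) (by omega) (by omega) (by linarith)
    omega
  · intro i j hij hj h3
    have := h.mem (N - 1 - j) (N - 1 - i) (by omega) (by omega) (by omega)
    constructor <;> linarith [this.1, this.2]
  · intro s hs hs'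
    obtain ⟨i, j, hij, hj, h3, he⟩ := h.surj (-s) (by linarith) (by linarith)
    refine ⟨N - 1 - j, N - 1 - i, by omega, by omega, by omega, ?_⟩
    have e1 : N - 1 - (N - 1 - j) = j := by omega
    have e2 : N - 1 - (N - 1 - i) = i := by omega
    simp only [e1, e2]
    linarith

lemma collision (h : NearMagic N x p q c T) (i j k l : ℕ) (hij : i < j) (hjk : j < k) (hkl : k < l)
    (hl : l < N) (he : x j - x i = x l - x k) : (p = i ∧ q = l) ∨ (p = j ∧ q = k) := by
  by_contra hc
  have := h.inj i l j k (by omega) hl hjk (by omega) (by omega) (by omega) (by linarith)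
  omega

/-- The gaps of length one forced by the two or three smallest edge sums. -/
lemma bottom (h : NearMagic N x p q c T) (hN : 8 ≤ N) :
    (¬ (p = 0 ∧ q = 1) → x 2 = x 1 + 1) ∧
    ((p = 0 ∧ q = 1) ∨ 4 ≤ q → x 1 = x 0 + 1 ∨ x 3 = x 2 + 1) := by
  have m01 := h.mono 0 1 (by omega) (by omega)
  have m12 := h.mono 1 2 (by omega) (by omega)
  have m23 := h.mono 2 3 (by omega) (by omega)
  have m34 := h.mono 3 4 (by omega) (by omega)
  have hlt := h.lt
  -- Only four pairs can have a sum below both `x 1 + x 3` and `x 0 + x 4`.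
  have classify : ∀ i j, i < j → j < N → (i = 0 ∧ j = 1) ∨ (i = 0 ∧ j = 2) ∨ (i = 1 ∧ j = 2) ∨
      (i = 0 ∧ j = 3) ∨ x 1 + x 3 ≤ x i + x j ∨ x 0 + x 4 ≤ x i + x j := by
    intro i j hij hj
    by_cases h4 : 4 ≤ j
    · have := h.mono_le 4 j h4 hj
      have := h.mono_le 0 i (by omega) (by omega)
      right; right; right; right; right; linarith
    · by_cases h3 : j = 3 ∧ 1 ≤ i
      · have := h.mono_le 1 i h3.2 (by omega)
        rw [h3.1]
        right; right; right; right; left; linarith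
      · omega
  have large : ∃ s, x 1 + x 3 < s ∧ x 0 + x 4 < s ∧ s ≤ T := by
    have m45 := h.mono 4 5 (by omega) (by omega)
    have m56 := h.mono 5 6 (by omega) (by omega)
    by_cases hc : p = 4 ∧ q = 5
    · exact ⟨_, by linarith, by linarith, (h.mem 4 6 (by omega) (by omega) (by omega)).2⟩
    · exact ⟨_, by linarith, by linarith, (h.mem 4 5 (by omega) (by omega) (by omega)).2⟩
  obtain ⟨t, ht1, ht2, htT⟩ := large
  by_cases hA : p = 0 ∧ q = 1
  · refine ⟨fun hn => absurd hA hn, fun _ => ?_⟩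
    have a02 := h.mem 0 2 (by omega) (by omega) (by omega)
    have hc : c = x 0 + x 2 := by
      obtain ⟨i, j, hij, hj, hm, he⟩ := h.surj c le_rfl (by linarith)
      rcases classify i j hij hj with ⟨rfl, rfl⟩ | ⟨rfl, rfl⟩ | ⟨rfl, rfl⟩ | ⟨rfl, rfl⟩ | h' | h' <;>
        omega
    obtain ⟨i, j, hij, hj, hm, he⟩ := h.surj (c + 1) (by linarith) (by omega)
    rcases classify i j hij hj with ⟨rfl, rfl⟩ | ⟨rfl, rfl⟩ | ⟨rfl, rfl⟩ | ⟨rfl, rfl⟩ | h' | h' <;>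
      omega
  · have a01 := h.mem 0 1 (by omega) (by omega) (by omega)
    have hc : c = x 0 + x 1 := by
      obtain ⟨i, j, hij, hj, hm, he⟩ := h.surj c le_rfl (by linarith)
      rcases classify i j hij hj with ⟨rfl, rfl⟩ | ⟨rfl, rfl⟩ | ⟨rfl, rfl⟩ | ⟨rfl, rfl⟩ | h' | h' <;>
        omega
    have h21 : x 2 = x 1 + 1 := by
      obtain ⟨i, j, hij, hj, hm, he⟩ := h.surj (c + 1) (by linarith) (by omega)
      rcases classify i j hij hj with ⟨rfl, rfl⟩ | ⟨rfl, rfl⟩ | ⟨rfl, rfl⟩ | ⟨rfl, rfl⟩ | h' | h' <;>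
        omega
    refine ⟨fun _ => h21, fun hq => ?_⟩
    obtain ⟨i, j, hij, hj, hm, he⟩ := h.surj (c + 2) (by linarith) (by omega)
    rcases classify i j hij hj with ⟨rfl, rfl⟩ | ⟨rfl, rfl⟩ | ⟨rfl, rfl⟩ | ⟨rfl, rfl⟩ | h' | h' <;>
      omega

theorem false_of_eight_le (h : NearMagic N x p q c T) (hN : 8 ≤ N) : False := by
  obtain ⟨b1, b2⟩ := h.bottom hN
  obtain ⟨t1, t2⟩ := h.reflect.bottom hN
  have hlt := h.lt
  have hbd := h.bd
  have e1 : N - 1 - 1 = N - 2 := by omega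
  have e2 : N - 1 - 2 = N - 3 := by omega
  have e3 : N - 1 - 3 = N - 4 := by omega
  simp only [e1, e2, e3, Nat.sub_zero] at t1 t2
  by_cases hT : p = N - 2 ∧ q = N - 1
  · have g := b1 (by omega)
    rcases t2 (by omega) with g' | g'
    · have := h.collision 1 2 (N - 2) (N - 1) (by omega) (by omega) (by omega) (by omega)
        (by linarith)
      omega
    · have := h.collision 1 2 (N - 4) (N - 3) (by omega) (by omega) (by omega) (by omega)
        (by linarith)
      omega
  · have g := t1 (by omega)
    have hq : (p = 0 ∧ q = 1) ∨ (p = 1 ∧ q = N - 2) ∨ (p = 2 ∧ q = N - 3) := by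
      by_cases hB : p = 0 ∧ q = 1
      · exact Or.inl hB
      · exact Or.inr (h.collision 1 2 (N - 3) (N - 2) (by omega) (by omega) (by omega) (by omega)
          (by linarith [b1 hB]))
    rcases b2 (by omega) with g' | g'
    · have := h.collision 0 1 (N - 3) (N - 2) (by omega) (by omega) (by omega) (by omega)
        (by linarith)
      omega
    · have := h.collision 2 3 (N - 3) (N - 2) (by omega) (by omega) (by omega) (by omega)
        (by linarith)
      omega

end NearMagic

/-- For every `n ≥ 7`, the graph `K_{n+1} − e` has infinite super edge-magic deficiency:
no injection of its vertices into the positive integers has pairwise distinct edge sums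
forming a set of `C(n+1,2) − 1` consecutive integers. -/
theorem complete_minus_edge_infinite_deficiency (n : ℕ) (hn : 7 ≤ n)
    (a b : Fin (n + 1)) (hab : a ≠ b) :
    ¬ ∃ f : Fin (n + 1) → ℕ, Function.Injective f ∧ (∀ v, 0 < f v) ∧
      ∃ c : ℕ, Set.BijOn (edgeSum f)
        ((⊤ : SimpleGraph (Fin (n + 1))).deleteEdges {s(a, b)}).edgeSet
        (Set.Icc c (c + ((n + 1).choose 2 - 1) - 1)) := by
  rintro ⟨f, hf, -, c, hmaps, hinj, hsurj⟩
  generalize c + ((n + 1).choose 2 - 1) - 1 = T at hmaps hsurj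
  have hσ : StrictMono (f ∘ Tuple.sort f) :=
    (Tuple.monotone_sort f).strictMono_of_injective (hf.comp (Tuple.sort f).injective)
  generalize Tuple.sort f = σ at hσ
  -- The positions of the ends of the deleted edge, in increasing order.
  obtain ⟨p, q, hpq, hdel⟩ : ∃ p q : Fin (n + 1), p < q ∧ s(a, b) = s(σ p, σ q) := by
    rcases lt_or_gt_of_ne (fun h => hab (σ.symm.injective h) : σ.symm a ≠ σ.symm b) with h | h
    · exact ⟨_, _, h, by simp⟩
    · exact ⟨_, _, h, by simp [Sym2.eq_swap]⟩
  rw [hdel] at hmaps hinj hsurj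
  have hsym : ∀ i j k l : Fin (n + 1), i < j → k < l → s(σ i, σ j) = s(σ k, σ l) →
      i = k ∧ j = l := by
    intro i j k l hij hkl he
    rw [Sym2.eq_iff] at he
    simp only [σ.injective.eq_iff] at he
    omega
  have hedge : ∀ i j : Fin (n + 1), i < j → ¬ (i = p ∧ j = q) →
      s(σ i, σ j) ∈ ((⊤ : SimpleGraph (Fin (n + 1))).deleteEdges {s(σ p, σ q)}).edgeSet := by
    intro i j hij hne
    rw [SimpleGraph.mem_edgeSet, SimpleGraph.deleteEdges_adj]
    exact ⟨fun h => hij.ne (σ.injective h), fun h => hne (hsym _ _ _ _ hij hpq h)⟩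
  let x : ℕ → ℤ := fun i => if h : i < n + 1 then (f (σ ⟨i, h⟩) : ℤ) else 0
  have hx : ∀ i (h : i < n + 1), x i = (f (σ ⟨i, h⟩) : ℤ) := fun i h => dif_pos h
  refine NearMagic.false_of_eight_le (N := n + 1) (x := x) (p := p) (q := q) (c := c) (T := T)
    ⟨hpq, q.2, ?_, ?_, ?_, ?_⟩ (by omega)
  · intro i j hij hj
    rw [hx i (by omega), hx j hj]
    exact_mod_cast hσ (Fin.mk_lt_mk (hx := by omega) (hy := hj) |>.2 hij)
  · intro i j k l hij hj hkl hl h1 h2 he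
    rw [hx i (by omega), hx j hj, hx k (by omega), hx l hl] at he
    have := hsym _ _ _ _ hij hkl (hinj
      (hedge ⟨i, by omega⟩ ⟨j, hj⟩ hij (by simpa [Fin.ext_iff] using h1))
      (hedge ⟨k, by omega⟩ ⟨l, hl⟩ hkl (by simpa [Fin.ext_iff] using h2))
      (by simp only [edgeSum, Sym2.lift_mk]; exact_mod_cast he))
    simpa [Fin.ext_iff] using this
  · intro i j hij hj h1
    rw [hx i (by omega), hx j hj]
    have := hmaps (hedge ⟨i, by omega⟩ ⟨j, hj⟩ hij (by simpa [Fin.ext_iff] using h1))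
    simp only [edgeSum, Sym2.lift_mk, Set.mem_Icc] at this
    exact_mod_cast this
  · intro s h1 h2
    lift s to ℕ using by omega
    obtain ⟨e, he, hes⟩ := hsurj (show s ∈ Set.Icc c T from ⟨by omega, by omega⟩)
    obtain ⟨i, j, hij, rfl⟩ : ∃ i j : Fin (n + 1), i < j ∧ e = s(σ i, σ j) := by
      induction e using Sym2.ind with
      | _ u v =>
        have huv : u ≠ v := by
          rw [SimpleGraph.mem_edgeSet, SimpleGraph.deleteEdges_adj] at he
          exact he.1
        rcases lt_or_gt_of_ne (fun h => huv (σ.symm.injective h) : σ.symm u ≠ σ.symm v) with h | h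
        · exact ⟨_, _, h, by simp⟩
        · exact ⟨_, _, h, by simp [Sym2.eq_swap]⟩
    refine ⟨i, j, hij, j.2, ?_, ?_⟩
    · rintro ⟨h3, h4⟩
      rw [Fin.ext h3, Fin.ext h4, SimpleGraph.mem_edgeSet, SimpleGraph.deleteEdges_adj] at he
      exact he.2 rfl
    · rw [hx i i.2, hx j j.2]
      simp only [edgeSum, Sym2.lift_mk] at hes
      exact_mod_cast hes
end

section
/- For every integer n ≥ 8, every simple graph G of order n whose size is at least C(n,2) − 1 (i.e., G is K_n or K_n minus one edge) has infinite super edge-magic deficiency: no injective function f from V(G) into the positive integers has pairwise distinct edge sums f(u) + f(v) forming a set of |E(G)| consecutive integers. -/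
/-- The smallest edge sums, when the edge sums of `G` have no holes and `x₀, x₁, x₂, x₃` carry the
four smallest labels; `M` is the only pair that may fail to be an edge. -/
lemma low_end {V : Type*} (G : SimpleGraph V) (f : V → ℤ) (M : Sym2 V)
    (hM : ∀ u v, u ≠ v → s(u, v) ≠ M → G.Adj u v)
    (hI : ∀ p q k l m, G.Adj p q → G.Adj k l → f p + f q ≤ m → m ≤ f k + f l →
      ∃ u v, G.Adj u v ∧ f u + f v = m)
    (x₀ x₁ x₂ x₃ : V) (h01 : f x₀ < f x₁) (h12 : f x₁ < f x₂) (h23 : f x₂ < f x₃)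
    (hlow : ∀ v, v = x₀ ∨ v = x₁ ∨ v = x₂ ∨ f x₃ ≤ f v) :
    (M ≠ s(x₀, x₁) → f x₂ = f x₁ + 1) ∧
    (M ≠ s(x₀, x₃) → f x₃ = f x₂ + 1 ∨ f x₁ = f x₀ + 1) := by
  have n01 : x₀ ≠ x₁ := by rintro rfl; omega
  have n02 : x₀ ≠ x₂ := by rintro rfl; omega
  have n03 : x₀ ≠ x₃ := by rintro rfl; omega
  have n12 : x₁ ≠ x₂ := by rintro rfl; omega
  have n13 : x₁ ≠ x₃ := by rintro rfl; omega
  have n23 : x₂ ≠ x₃ := by rintro rfl; omega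
  have A02 : G.Adj x₀ x₂ := by
    by_contra hA
    have hMe : M = s(x₀, x₂) := by
      by_contra h
      exact hA (hM _ _ n02 (Ne.symm h))
    have A01 : G.Adj x₀ x₁ := hM _ _ n01 (by rw [hMe]; simp [n02, n12])
    have A03 : G.Adj x₀ x₃ := hM _ _ n03 (by rw [hMe]; simp [n02, n23.symm])
    -- Without the edge `x₀x₂`, no edge has a sum one above the smallest.
    obtain ⟨u, v, huv, hs⟩ := hI _ _ _ _ (f x₀ + f x₁ + 1) A01 A03 (by omega) (by omega)
    have hne := huv.ne
    have hvu := huv.symm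
    rcases hlow u with rfl | rfl | rfl | hu <;> rcases hlow v with rfl | rfl | rfl | hv <;>
      first | omega | contradiction
  refine ⟨fun h => ?_, fun h => ?_⟩
  · have A01 := hM _ _ n01 h.symm
    obtain ⟨u, v, huv, hs⟩ := hI _ _ _ _ (f x₀ + f x₁ + 1) A01 A02 (by omega) (by omega)
    have hne := huv.ne
    rcases hlow u with rfl | rfl | rfl | hu <;> rcases hlow v with rfl | rfl | rfl | hv <;>
      first | omega | contradiction
  · have A03 := hM _ _ n03 h.symm
    obtain ⟨u, v, huv, hs⟩ := hI _ _ _ _ (f x₀ + f x₂ + 1) A02 A03 (by omega) (by omega)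
    have hne := huv.ne
    rcases hlow u with rfl | rfl | rfl | hu <;> rcases hlow v with rfl | rfl | rfl | hv <;>
      first | omega | contradiction

/-- Two disjoint pairs of vertices with label difference `1` produce two equal sums, one of which
must belong to the non-edge `M`. -/
lemma unit_gaps {V : Type*} (G : SimpleGraph V) (f : V → ℤ) (M : Sym2 V)
    (hM : ∀ u v, u ≠ v → s(u, v) ≠ M → G.Adj u v)
    (hinj : ∀ p q k l, G.Adj p q → G.Adj k l → f p + f q = f k + f l → s(p, q) = s(k, l))
    (i j k l : V) (hjk : f j < f k) (hij : f j = f i + 1) (hkl : f l = f k + 1) :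
    M = s(j, k) ∨ M = s(i, l) := by
  by_contra! h
  have e := hinj j k i l (hM _ _ (by rintro rfl; omega) h.1.symm)
    (hM _ _ (by rintro rfl; omega) h.2.symm) (by omega)
  rw [Sym2.eq_iff] at e
  rcases e with ⟨rfl, rfl⟩ | ⟨rfl, rfl⟩ <;> omega

lemma exists_only_nonedge {n : ℕ} (hn : 8 ≤ n) (G : SimpleGraph (Fin n))
    (hsize : n.choose 2 - 1 ≤ G.edgeSet.ncard) :
    ∃ M : Sym2 (Fin n), ∀ u v, u ≠ v → s(u, v) ≠ M → G.Adj u v := by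
  classical
  have htop : (⊤ : SimpleGraph (Fin n)).edgeSet.ncard = n.choose 2 := by
    rw [← SimpleGraph.coe_edgeFinset, Set.ncard_coe_finset,
      SimpleGraph.card_edgeFinset_top_eq_card_choose_two, Fintype.card_fin]
  have hd := Set.ncard_sdiff_add_ncard_of_subset (SimpleGraph.edgeSet_mono (le_top (a := G)))
  have h1 : ((⊤ : SimpleGraph (Fin n)).edgeSet \ G.edgeSet).ncard ≤ 1 := by omega
  have : Nonempty (Sym2 (Fin n)) := ⟨s(⟨0, by omega⟩, ⟨0, by omega⟩)⟩
  obtain ⟨M, hMs⟩ := (Set.ncard_le_one_iff_subset_singleton (Set.toFinite _)).1 h1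
  refine ⟨M, fun u v huv hne => ?_⟩
  by_contra hA
  exact hne (hMs ⟨by simpa using huv, by simpa using hA⟩)

/-- For every `n ≥ 8`, every graph of order `n` and size at least `C(n,2) − 1`
(i.e. `K_n` or `K_n − e`) has infinite super edge-magic deficiency: no injection of
its vertices into the positive integers has pairwise distinct edge sums forming a set
of `|E(G)|` consecutive integers. -/
theorem large_graphs_infinite_deficiency (n : ℕ) (hn : 8 ≤ n)
    (G : SimpleGraph (Fin n)) (hsize : n.choose 2 - 1 ≤ G.edgeSet.ncard) :
    ¬ ∃ f : Fin n → ℕ, Function.Injective f ∧ (∀ v, 0 < f v) ∧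
      ∃ c : ℕ, Set.BijOn (edgeSum f) G.edgeSet
        (Set.Icc c (c + G.edgeSet.ncard - 1)) := by
  rintro ⟨f, hf, -, c, hmaps, hinjOn, hsurj⟩
  obtain ⟨M, hM⟩ := exists_only_nonedge hn G hsize
  set g : Fin n → ℤ := fun v => (f v : ℤ) with hg
  have hinj : ∀ p q k l, G.Adj p q → G.Adj k l → g p + g q = g k + g l →
      s(p, q) = s(k, l) := by
    intro p q k l hpq hkl h
    refine hinjOn (G.mem_edgeSet.2 hpq) (G.mem_edgeSet.2 hkl) ?_
    change f p + f q = f k + f l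
    simp only [hg] at h
    omega
  have hI : ∀ p q k l m, G.Adj p q → G.Adj k l → g p + g q ≤ m → m ≤ g k + g l →
      ∃ u v, G.Adj u v ∧ g u + g v = m := by
    intro p q k l m hpq hkl h₁ h₂
    have m₁ : f p + f q ∈ Set.Icc c _ := hmaps (G.mem_edgeSet.2 hpq)
    have m₂ : f k + f l ∈ Set.Icc c _ := hmaps (G.mem_edgeSet.2 hkl)
    simp only [hg, Set.mem_Icc] at h₁ h₂ m₁ m₂
    obtain ⟨e, he, hs⟩ := hsurj (Set.mem_Icc.2 (⟨by omega, by omega⟩ :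
      c ≤ m.toNat ∧ m.toNat ≤ c + G.edgeSet.ncard - 1))
    induction e using Sym2.ind with
    | _ u v =>
      refine ⟨u, v, he, ?_⟩
      change f u + f v = m.toNat at hs
      simp only [hg]
      omega
  -- `x i` is the vertex with the `i`-th smallest label.
  set x : Equiv.Perm (Fin n) := Tuple.sort f with hx
  have hmono : StrictMono (g ∘ x) := by
    have h := (Tuple.monotone_sort f).strictMono_of_injective (hf.comp (Tuple.sort f).injective)
    intro i j hij
    exact Int.ofNat_lt.2 (h hij)
  have hlt : ∀ (i j : ℕ) (hi : i < n) (hj : j < n), i < j → g (x ⟨i, hi⟩) < g (x ⟨j, hj⟩) :=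
    fun i j hi hj hij => hmono (show (⟨i, hi⟩ : Fin n) < ⟨j, hj⟩ from hij)
  have hle : ∀ (i j : ℕ) (hi : i < n) (hj : j < n), i ≤ j → g (x ⟨i, hi⟩) ≤ g (x ⟨j, hj⟩) :=
    fun i j hi hj hij => hmono.monotone (show (⟨i, hi⟩ : Fin n) ≤ ⟨j, hj⟩ from hij)
  obtain ⟨l₁, l₂⟩ := low_end G g M hM hI (x ⟨0, by omega⟩) (x ⟨1, by omega⟩) (x ⟨2, by omega⟩)
    (x ⟨3, by omega⟩) (hlt _ _ _ _ (by omega)) (hlt _ _ _ _ (by omega))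
    (hlt _ _ _ _ (by omega)) (by
      intro v
      obtain ⟨⟨i, hi⟩, rfl⟩ := x.surjective v
      simp only [EmbeddingLike.apply_eq_iff_eq, Fin.mk.injEq]
      by_cases h : 3 ≤ i
      · exact Or.inr (Or.inr (Or.inr (hle _ _ _ _ h)))
      · omega)
  obtain ⟨u₁, u₂⟩ := low_end G (fun v => - g v) M hM (by
      intro p q k l m hpq hkl h₁ h₂
      obtain ⟨u, v, huv, hs⟩ := hI k l p q (-m) hkl hpq (by omega) (by omega)
      exact ⟨u, v, huv, by omega⟩)
    (x ⟨n - 1, by omega⟩) (x ⟨n - 2, by omega⟩) (x ⟨n - 3, by omega⟩)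
    (x ⟨n - 4, by omega⟩) (neg_lt_neg (hlt _ _ _ _ (by omega)))
    (neg_lt_neg (hlt _ _ _ _ (by omega))) (neg_lt_neg (hlt _ _ _ _ (by omega))) (by
      intro v
      obtain ⟨⟨i, hi⟩, rfl⟩ := x.surjective v
      simp only [EmbeddingLike.apply_eq_iff_eq, Fin.mk.injEq]
      by_cases h : i ≤ n - 4
      · exact Or.inr (Or.inr (Or.inr (neg_le_neg (hle _ _ _ _ h))))
      · omega)
  have hgap : ∀ (i j k l : ℕ) (hi : i < n) (hj : j < n) (hk : k < n) (hl : l < n), j < k →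
      g (x ⟨j, hj⟩) = g (x ⟨i, hi⟩) + 1 → g (x ⟨l, hl⟩) = g (x ⟨k, hk⟩) + 1 →
      M = s(x ⟨j, hj⟩, x ⟨k, hk⟩) ∨ M = s(x ⟨i, hi⟩, x ⟨l, hl⟩) :=
    fun i j k l hi hj hk hl hjk h₁ h₂ =>
      unit_gaps G g M hM hinj _ _ _ _ (hlt _ _ _ _ hjk) h₁ h₂
  have hpair : ∀ (i j k l : ℕ) (hi : i < n) (hj : j < n) (hk : k < n) (hl : l < n),
      M = s(x ⟨i, hi⟩, x ⟨j, hj⟩) → M = s(x ⟨k, hk⟩, x ⟨l, hl⟩) →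
      (i = k ∧ j = l) ∨ (i = l ∧ j = k) := by
    intro i j k l hi hj hk hl h₁ h₂
    have h := h₁.symm.trans h₂
    simpa only [Sym2.eq_iff, EmbeddingLike.apply_eq_iff_eq, Fin.mk.injEq] using h
  by_cases c₁ : M = s(x ⟨0, by omega⟩, x ⟨1, by omega⟩)
  · have top := u₁ (fun h => by have := hpair _ _ _ _ _ _ _ _ c₁ h; omega)
    rcases l₂ (fun h => by have := hpair _ _ _ _ _ _ _ _ c₁ h; omega) with b | b
    all_goals
      rcases hgap _ _ (n - 3) (n - 2) _ _ (by omega) (by omega) (by omega) b (by omega)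
        with h | h <;>
      · have := hpair _ _ _ _ _ _ _ _ c₁ h
        omega
  have bot := l₁ c₁
  by_cases c₂ : M = s(x ⟨n - 1, by omega⟩, x ⟨n - 2, by omega⟩)
  · rcases u₂ (fun h => by have := hpair _ _ _ _ _ _ _ _ c₂ h; omega) with b | b
    · rcases hgap _ _ (n - 4) (n - 3) _ _ (by omega) (by omega) (by omega) bot (by omega)
        with h | h <;>
      · have := hpair _ _ _ _ _ _ _ _ c₂ h
        omega
    · rcases hgap _ _ (n - 2) (n - 1) _ _ (by omega) (by omega) (by omega) bot (by omega)
        with h | h <;>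
      · have := hpair _ _ _ _ _ _ _ _ c₂ h
        omega
  have top := u₁ c₂
  rcases hgap _ _ (n - 3) (n - 2) _ _ (by omega) (by omega) (by omega) bot (by omega)
    with c₃ | c₃
  all_goals
    rcases l₂ (fun h => by have := hpair _ _ _ _ _ _ _ _ c₃ h; omega) with b | b
    all_goals
      rcases hgap _ _ (n - 3) (n - 2) _ _ (by omega) (by omega) (by omega) b (by omega)
        with h | h <;>
      · have := hpair _ _ _ _ _ _ _ _ c₃ h
        omega
end

section
/- For every even integer n ≥ 4, the prism D_n satisfies μ_s(D_n) ≤ n + 1; that is, there exists an injective function f : V(D_n) → {1, 2, ..., 3n + 1} such that the sums f(u) + f(v) over the 3n edges of D_n are pairwise distinct and form a set of 3n consecutive integers. -/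
/-- The prism `D_n = C_n □ K₂`. -/
def prism (n : ℕ) : SimpleGraph (Fin n × Fin 2) :=
  (SimpleGraph.cycleGraph n).boxProd (⊤ : SimpleGraph (Fin 2))

namespace PrismLabel

/-- Label of the `A`-vertex of column `i`, for `n = 2 * m`. -/
def aLab (m i : ℕ) : ℕ := if i < m then 2 * i + 1 else 2 * (2 * m - 1 - i) + 2

/-- Label of the `B`-vertex of column `j`, for `n = 2 * m`. The columns `0` and `m` carry the
corrections at the two folds. -/
def bLab (m j : ℕ) : ℕ :=
  if j = 0 then 2 * m + 1
  else if j < m then 4 * j + 2 * m + 2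
  else if j = m then 6 * m + 1
  else 4 * (2 * m - 1 - j) + 2 * m + 4

/-- The labelling of the prism on `2 * m` columns; `(i, r)` is an `A`-vertex iff `i + r` is even. -/
def lab (m : ℕ) (v : Fin (2 * m) × Fin 2) : ℕ :=
  if (v.1.val + v.2.val) % 2 = 0 then aLab m v.1.val else bLab m v.1.val

lemma aLab_bounds {m i : ℕ} (hi : i < 2 * m) : 1 ≤ aLab m i ∧ aLab m i ≤ 2 * m := by
  unfold aLab; split_ifs <;> omega

lemma bLab_bounds {m i : ℕ} (hm : 2 ≤ m) (hi : i < 2 * m) :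
    2 * m + 1 ≤ bLab m i ∧ bLab m i ≤ 6 * m + 1 := by
  unfold bLab; split_ifs <;> omega

lemma aLab_inj {m i j : ℕ} (hi : i < 2 * m) (hj : j < 2 * m) (h : aLab m i = aLab m j) :
    i = j := by
  unfold aLab at h; split_ifs at h <;> omega

lemma bLab_inj {m i j : ℕ} (hi : i < 2 * m) (hj : j < 2 * m) (h : bLab m i = bLab m j) :
    i = j := by
  unfold bLab at h; split_ifs at h <;> omega

lemma lab_injective {m : ℕ} (hm : 2 ≤ m) : Function.Injective (lab m) := by
  rintro ⟨⟨i, hi⟩, ⟨r, hr⟩⟩ ⟨⟨j, hj⟩, ⟨s, hs⟩⟩ h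
  have h1 := aLab_bounds hi
  have h2 := aLab_bounds hj
  have h3 := bLab_bounds hm hi
  have h4 := bLab_bounds hm hj
  simp only [lab] at h
  simp only [Prod.mk.injEq, Fin.mk.injEq]
  split_ifs at h
  · have := aLab_inj hi hj h
    omega
  · omega
  · omega
  · have := bLab_inj hi hj h
    omega

lemma lab_mem {m : ℕ} (hm : 2 ≤ m) (v : Fin (2 * m) × Fin 2) :
    lab m v ∈ Set.Icc 1 (3 * (2 * m) + 1) := by
  have h1 := aLab_bounds v.1.isLt
  have h3 := bLab_bounds hm v.1.isLt
  rw [Set.mem_Icc]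
  unfold lab
  split_ifs <;> omega

/-- Columns `i` and `j` of the prism on `n` columns are equal or cyclically adjacent. -/
def Near (n i j : ℕ) : Prop :=
  i = j ∨ i + 1 = j ∨ j + 1 = i ∨ (i = 0 ∧ j + 1 = n) ∨ (j = 0 ∧ i + 1 = n)

/-- Every integer of the target interval is the sum of an `A`-label and a `B`-label in near
columns. -/
lemma exists_labels {m t : ℕ} (hm : 2 ≤ m) (h1 : 2 * m + 2 ≤ t) (h2 : t ≤ 8 * m + 1) :
    ∃ i j, i < 2 * m ∧ j < 2 * m ∧ Near (2 * m) i j ∧ aLab m i + bLab m j = t := by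
  have key : ∀ i j, i < 2 * m → j < 2 * m → Near (2 * m) i j → aLab m i + bLab m j = t →
      ∃ i j, i < 2 * m ∧ j < 2 * m ∧ Near (2 * m) i j ∧ aLab m i + bLab m j = t :=
    fun i j a b c d => ⟨i, j, a, b, c, d⟩
  unfold Near aLab bLab at *
  -- `t = s + 2m + 2`, so that the unshifted sum is `s - 1`; write `s = 6p + r`.
  obtain ⟨s, rfl⟩ := Nat.exists_eq_add_of_le h1
  obtain ⟨p, r, hr, rfl⟩ : ∃ p r, r < 6 ∧ s = 6 * p + r :=
    ⟨s / 6, s % 6, Nat.mod_lt _ (by norm_num), by omega⟩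
  have hp : p < m := by omega
  by_cases hp0 : p = 0
  · subst hp0
    interval_cases r
    · exact key 0 0 (by omega) (by omega) (by omega) (by split_ifs <;> omega)
    · exact key (2 * m - 1) 0 (by omega) (by omega) (by omega) (by split_ifs <;> omega)
    · exact key 1 0 (by omega) (by omega) (by omega) (by split_ifs <;> omega)
    · exact key 0 (2 * m - 1) (by omega) (by omega) (by omega) (by split_ifs <;> omega)
    · exact key (2 * m - 1) (2 * m - 1) (by omega) (by omega) (by omega) (by split_ifs <;> omega)
    · exact key 0 1 (by omega) (by omega) (by omega) (by split_ifs <;> first | omega | contradiction)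
  by_cases hpm : p = m - 1
  · subst hpm
    interval_cases r
    · exact key (2 * m - 1 - (m - 1)) (2 * m - 1 - (m - 2)) (by omega) (by omega) (by omega)
        (by split_ifs <;> omega)
    · exact key (m - 1) (m - 1) (by omega) (by omega) (by omega) (by split_ifs <;> omega)
    · exact key m (m - 1) (by omega) (by omega) (by omega) (by split_ifs <;> omega)
    · exact key (m + 1) m (by omega) (by omega) (by omega) (by split_ifs <;> omega)
    · exact key (m - 1) m (by omega) (by omega) (by omega) (by split_ifs <;> omega)
    · exact key m m (by omega) (by omega) (by omega) (by split_ifs <;> omega)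
  interval_cases r
  · exact key (2 * m - 1 - p) (2 * m - p) (by omega) (by omega) (by omega)
      (by split_ifs <;> omega)
  · exact key p p (by omega) (by omega) (by omega) (by split_ifs <;> omega)
  · exact key (2 * m - p) (2 * m - 1 - p) (by omega) (by omega) (by omega)
      (by split_ifs <;> omega)
  · exact key (p + 1) p (by omega) (by omega) (by omega) (by split_ifs <;> omega)
  · exact key (2 * m - 1 - p) (2 * m - 1 - p) (by omega) (by omega) (by omega)
      (by split_ifs <;> omega)
  · exact key p (p + 1) (by omega) (by omega) (by omega) (by split_ifs <;> first | omega | contradiction)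

lemma cycle_adj {n : ℕ} {i j : Fin n} (hn : 2 ≤ n) (h : Near n i j) (hij : i ≠ j) :
    (SimpleGraph.cycleGraph n).Adj i j := by
  have hi := i.isLt
  have hj := j.isLt
  have hij' : i.val ≠ j.val := fun h => hij (Fin.ext h)
  rw [SimpleGraph.cycleGraph_adj', Fin.sub_def, Fin.sub_def]
  simp only
  unfold Near at h
  rcases h with h | h | h | h | h
  · omega
  · right
    rw [show n - i.val + j.val = 1 + n by omega, Nat.add_mod_right, Nat.mod_eq_of_lt (by omega)]
  · left
    rw [show n - j.val + i.val = 1 + n by omega, Nat.add_mod_right, Nat.mod_eq_of_lt (by omega)]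
  · left
    rw [show n - j.val + i.val = 1 by omega, Nat.mod_eq_of_lt (by omega)]
  · right
    rw [show n - i.val + j.val = 1 by omega, Nat.mod_eq_of_lt (by omega)]

/-- The `A`-vertex of a column is adjacent to the `B`-vertex of every near column; across the wrap
between the columns `0` and `2 * m - 1` this uses that the number of columns is even. -/
lemma exists_edge {m i j : ℕ} (hm : 2 ≤ m) (hi : i < 2 * m) (hj : j < 2 * m)
    (h : Near (2 * m) i j) :
    ∃ e ∈ (prism (2 * m)).edgeSet, edgeSum (lab m) e = aLab m i + bLab m j := by
  refine ⟨s((⟨i, hi⟩, ⟨i % 2, by omega⟩), (⟨j, hj⟩, ⟨(j + 1) % 2, by omega⟩)), ?_, ?_⟩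
  · rw [SimpleGraph.mem_edgeSet, prism, SimpleGraph.boxProd_adj]
    by_cases hij : i = j
    · right
      subst hij
      simp only [SimpleGraph.top_adj, ne_eq, Fin.mk.injEq, and_true]
      omega
    · left
      refine ⟨cycle_adj (by omega) h (by simpa using hij), ?_⟩
      simp only [Fin.mk.injEq]
      unfold Near at h
      omega
  · simp only [edgeSum, Sym2.lift_mk, lab]
    rw [if_pos (by omega), if_neg (by omega)]

lemma ncard_edgeSet_prism {n : ℕ} (hn : 3 ≤ n) : (prism n).edgeSet.ncard = 3 * n := by
  classical
  obtain ⟨k, rfl⟩ := Nat.exists_eq_add_of_le' hn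
  have hdeg : ∀ v, (prism (k + 3)).degree v = 3 := by
    intro v
    have h := SimpleGraph.degree_boxProd (G := SimpleGraph.cycleGraph (k + 3))
      (H := (⊤ : SimpleGraph (Fin 2))) v
    rw [SimpleGraph.cycleGraph_degree_three_le] at h
    unfold prism
    convert h using 1
    · congr!
    · simp
  have hs := (prism (k + 3)).sum_degrees_eq_twice_card_edges
  simp only [hdeg, Finset.sum_const, Finset.card_univ, Fintype.card_prod, Fintype.card_fin,
    smul_eq_mul] at hs
  rw [← SimpleGraph.coe_edgeFinset, Set.ncard_coe_finset]
  omega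

end PrismLabel

/-- For every even `n ≥ 4`, `μₛ(D_n) ≤ n + 1`: there is an injection
`f : V(D_n) → [1, 3n+1]` whose `3n` edge sums are pairwise distinct and form `3n`
consecutive integers. -/
theorem prism_deficiency_le (n : ℕ) (hn : 4 ≤ n) (hev : Even n) :
    ∃ f : Fin n × Fin 2 → ℕ, Function.Injective f ∧
      (∀ v, f v ∈ Set.Icc 1 (3 * n + 1)) ∧
      ∃ c : ℕ, Set.BijOn (edgeSum f) (prism n).edgeSet (Set.Icc c (c + 3 * n - 1)) := by
  obtain ⟨m, rfl⟩ := even_iff_exists_two_mul.mp hev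
  have hm : 2 ≤ m := by omega
  refine ⟨PrismLabel.lab m, PrismLabel.lab_injective hm, PrismLabel.lab_mem hm, 2 * m + 2, ?_⟩
  have hcard := PrismLabel.ncard_edgeSet_prism (n := 2 * m) (by omega)
  have hfin : (prism (2 * m)).edgeSet.Finite := Set.toFinite _
  have hIcc : (Set.Icc (2 * m + 2) (2 * m + 2 + 3 * (2 * m) - 1)).ncard = 3 * (2 * m) := by
    rw [← Finset.coe_Icc, Set.ncard_coe_finset, Nat.card_Icc]
    omega
  have hsurj : Set.SurjOn (edgeSum (PrismLabel.lab m)) (prism (2 * m)).edgeSet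
      (Set.Icc (2 * m + 2) (2 * m + 2 + 3 * (2 * m) - 1)) := by
    rintro t ⟨h1, h2⟩
    obtain ⟨i, j, hi, hj, hnear, hsum⟩ := PrismLabel.exists_labels hm h1 (by omega)
    obtain ⟨e, he, hes⟩ := PrismLabel.exists_edge hm hi hj hnear
    exact ⟨e, he, hes.trans hsum⟩
  -- The image contains the interval and has at most `3n` elements, so the two sets coincide.
  have himg := Set.eq_of_subset_of_ncard_le hsurj
    (by rw [hIcc, ← hcard]; exact Set.ncard_image_le hfin) (hfin.image _)
  refine ⟨fun e he => himg ▸ Set.mem_image_of_mem _ he, ?_, hsurj⟩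
  exact Set.injOn_of_ncard_image_eq (by rw [← himg, hIcc, hcard]) hfin
end

section
/- For every integer n ≥ 2, the prism D_{2n} = C_{2n} □ K₂ has an α-valuation: there exists an injective function f : V(D_{2n}) → {0, 1, ..., 6n} such that the induced edge labels |f(u) − f(v)|, uv ∈ E(D_{2n}), are pairwise distinct (hence they are exactly 1, 2, ..., 6n), and there exists an integer λ with min{f(u), f(v)} ≤ λ < max{f(u), f(v)} for every edge uv. -/
/-!
The prism `D_{2n}` is bipartite by the parity of `i + r` over its vertices `(i, r)`, and each column
`i` holds one vertex of either class. Give the even vertex of column `i` the label `a i` and the odd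
one the label `b i`. The vertices labelled `b i` and `a j` are adjacent exactly when `i = j` or `i`
and `j` are cyclically consecutive, so the edge labels are the differences `b i - a j` over such
pairs (`exists_alpha_of_columns`).

Take `a` increasing from `0` and `b` decreasing from `6n`. With `L i = b i - a i`, the edges between
columns `i` and `i + 1`, together with the rung at `i + 1`, have the labels `L i - p`, `L i - q`,
`L i - p - q`, where `p = a (i+1) - a i` and `q = b i - b (i+1)`. A step with `{p, q} = {1, 2}` uses
three consecutive numbers, while a step with `(p, q) = (1, 3)` uses `1, 3, 4` and leaves one number
out. With exactly two steps of the second kind, at `i = n - 2` and `i = n`, the labels of the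
ladder obtained by cutting the cycle are all of `1, …, 6n` except `3n + 4` and `3n - 3`. Taking
`(p, q) = (2, 1)` for the first `n - 3` steps and `(1, 2)` for the other ordinary ones makes the two
remaining edges, between the last column and column `0`, get exactly these two labels. This needs
`3 ≤ n`; the cube `D_4` is labelled by hand.
-/

/-- The induced edge label `|f u − f v|` of an unordered pair (in `ℕ`). -/
def edgeDiff {V : Type*} (f : V → ℕ) : Sym2 V → ℕ :=
  Sym2.lift ⟨fun a b => max (f a) (f b) - min (f a) (f b),
    fun a b => by dsimp only; omega⟩

/-- Columns `i` and `j` of the prism `D_{2n}` are equal or cyclically consecutive. -/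
def ColumnsClose (n i j : ℕ) : Prop :=
  i = j ∨ j = i + 1 ∨ i = j + 1 ∨ (i = 0 ∧ j + 1 = 2 * n) ∨ (j = 0 ∧ i + 1 = 2 * n)

/-- The labeling of `D_{2n}` giving `a i` to the even vertex of column `i` and `b i` to the odd
one. -/
def columnLabel (n : ℕ) (a b : ℕ → ℕ) (v : Fin (2 * n) × Fin 2) : ℕ :=
  if (v.1.val + v.2.val) % 2 = 0 then a v.1 else b v.1

/-- Adjacent vertices have opposite parity; the wrap-around edges respect this because the cycle
has even length. -/
lemma prism_adj_parity {n : ℕ} {u v : Fin (2 * n) × Fin 2} (h : (prism (2 * n)).Adj u v) :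
    (u.1.val + u.2.val) % 2 ≠ (v.1.val + v.2.val) % 2 ∧ ColumnsClose n u.1 v.1 := by
  obtain ⟨⟨i, hi⟩, ⟨r, hr⟩⟩ := u
  obtain ⟨⟨j, hj⟩, ⟨s, hs⟩⟩ := v
  unfold prism at h
  rw [SimpleGraph.boxProd_adj, SimpleGraph.cycleGraph_adj'] at h
  simp only [Fin.sub_def, SimpleGraph.top_adj, ne_eq, Fin.mk.injEq] at h
  unfold ColumnsClose
  dsimp only
  -- Each `mod 2n` in the cyclic differences either keeps its argument or subtracts `2n` once.
  have key : ∀ x y, x < 2 * n → y < 2 * n → (2 * n - y + x) % (2 * n) = 1 →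
      x = y + 1 ∨ (x = 0 ∧ y + 1 = 2 * n) := by
    intro x y hx hy hxy
    rcases lt_or_ge (2 * n - y + x) (2 * n) with h1 | h1
    · rw [Nat.mod_eq_of_lt h1] at hxy
      omega
    · rw [Nat.mod_eq_sub_mod h1, Nat.mod_eq_of_lt (by omega)] at hxy
      omega
  rcases h with ⟨h | h, h'⟩ | ⟨h, h'⟩
  · have := key i j hi hj h
    omega
  · have := key j i hj hi h
    omega
  · omega

/-- Every edge of the prism joins an even vertex to an odd one. -/
lemma prism_edge_oriented {n : ℕ} {e : Sym2 (Fin (2 * n) × Fin 2)}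
    (he : e ∈ (prism (2 * n)).edgeSet) :
    ∃ u v : Fin (2 * n) × Fin 2, e = s(u, v) ∧ (u.1.val + u.2.val) % 2 = 0 ∧
      (v.1.val + v.2.val) % 2 = 1 ∧ ColumnsClose n u.1 v.1 := by
  induction e using Sym2.ind with
  | _ u v =>
    rw [SimpleGraph.mem_edgeSet] at he
    obtain ⟨hp, hc⟩ := prism_adj_parity he
    rcases Nat.mod_two_eq_zero_or_one (u.1.val + u.2.val) with h | h
    · exact ⟨u, v, rfl, h, by omega, hc⟩
    · refine ⟨v, u, Sym2.eq_swap, by omega, h, ?_⟩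
      unfold ColumnsClose at hc ⊢
      omega

lemma vertex_ext {n : ℕ} {u v : Fin (2 * n) × Fin 2} (h : u.1.val = v.1.val)
    (hp : (u.1.val + u.2.val) % 2 = (v.1.val + v.2.val) % 2) : u = v := by
  have h1 := u.2.isLt
  have h2 := v.2.isLt
  exact Prod.ext (Fin.ext h) (Fin.ext (by omega))

/-- Reduction of the theorem to the two sequences of column labels. -/
lemma exists_alpha_of_columns (n lam : ℕ) (a b : ℕ → ℕ)
    (ha : ∀ i < 2 * n, ∀ j < 2 * n, a i = a j → i = j)
    (hb : ∀ i < 2 * n, ∀ j < 2 * n, b i = b j → i = j)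
    (hle : ∀ i < 2 * n, a i ≤ lam ∧ lam < b i ∧ b i ≤ 6 * n)
    (hE : ∀ i < 2 * n, ∀ j < 2 * n, ∀ i' < 2 * n, ∀ j' < 2 * n,
      ColumnsClose n i j → ColumnsClose n i' j' → b j - a i = b j' - a i' → i = i' ∧ j = j') :
    ∃ f : Fin (2 * n) × Fin 2 → ℕ, Function.Injective f ∧
      (∀ v, f v ≤ 6 * n) ∧
      Set.InjOn (edgeDiff f) (prism (2 * n)).edgeSet ∧
      ∃ lam : ℕ, ∀ u v, (prism (2 * n)).Adj u v →
        min (f u) (f v) ≤ lam ∧ lam < max (f u) (f v) := by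
  refine ⟨columnLabel n a b, ?_, ?_, ?_, lam, ?_⟩
  · intro u v huv
    have hu := hle u.1 u.1.isLt
    have hv := hle v.1 v.1.isLt
    unfold columnLabel at huv
    split_ifs at huv with h1 h2 h2
    · exact vertex_ext (ha _ u.1.isLt _ v.1.isLt huv) (by omega)
    · omega
    · omega
    · exact vertex_ext (hb _ u.1.isLt _ v.1.isLt huv) (by omega)
  · intro v
    have hv := hle v.1 v.1.isLt
    unfold columnLabel
    split_ifs <;> omega
  · intro e he e' he' h
    obtain ⟨u, v, rfl, hu, hv, hc⟩ := prism_edge_oriented he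
    obtain ⟨u', v', rfl, hu', hv', hc'⟩ := prism_edge_oriented he'
    have h1 := hle u.1 u.1.isLt
    have h2 := hle v.1 v.1.isLt
    have h3 := hle u'.1 u'.1.isLt
    have h4 := hle v'.1 v'.1.isLt
    simp only [edgeDiff, Sym2.lift_mk, columnLabel, hu, hv, hu', hv', one_ne_zero, if_true,
      if_false] at h
    obtain ⟨e1, e2⟩ := hE u.1 u.1.isLt v.1 v.1.isLt u'.1 u'.1.isLt v'.1 v'.1.isLt hc hc' (by omega)
    rw [vertex_ext e1 (by omega), vertex_ext e2 (by omega)]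
  · intro u v huv
    have hu := hle u.1 u.1.isLt
    have hv := hle v.1 v.1.isLt
    have hp := (prism_adj_parity huv).1
    unfold columnLabel
    split_ifs <;> omega

/-- Labels of the even vertices: steps `2` up to column `n - 3`, steps `1` afterwards. -/
def lowLabel (n i : ℕ) : ℕ := if i + 3 ≤ n then 2 * i else i + n - 3

/-- Labels of the odd vertices: steps `-1` up to column `n - 3`, then steps `-2`, except for the
steps `-3` from column `n - 2` and from column `n`. -/
def highLabel (n i : ℕ) : ℕ :=
  if i + 3 ≤ n then 6 * n - i else if i + 2 = n then 7 * n - 3 - 2 * i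
  else if i ≤ n then 7 * n - 4 - 2 * i else 7 * n - 5 - 2 * i

/-- The label `highLabel n i - lowLabel n i` of the rung in column `i`, for
`3 ≤ n` and `i < 2 * n`. At `i = 2 * n` the value is `0`, a lower bound for the last
block of labels. -/
def rungLabel (n i : ℕ) : ℕ :=
  if i + 2 ≤ n then 6 * n - 3 * i else if i ≤ n then 6 * n - 3 * i - 1 else 6 * n - 3 * i - 2

/-- The labels of the edges of the cut-open ladder lie in consecutive blocks, one for each smaller
column index `min i j`, and miss the labels `3n + 4` and `3n - 3` of the wrap-around edges. -/
lemma ladder_label_block {n i j : ℕ} (hn : 3 ≤ n) (hi : i < 2 * n) (hj : j < 2 * n)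
    (h : i = j ∨ j = i + 1 ∨ i = j + 1) :
    rungLabel n (min i j + 1) < highLabel n j - lowLabel n i ∧
      highLabel n j - lowLabel n i ≤ rungLabel n (min i j) ∧
      highLabel n j - lowLabel n i ≠ 3 * n + 4 ∧ highLabel n j - lowLabel n i ≠ 3 * n - 3 := by
  unfold rungLabel highLabel lowLabel
  rcases h with rfl | rfl | rfl
  · rw [min_self]
    split_ifs <;> omega
  · rw [min_eq_left (by omega)]
    split_ifs <;> omega
  · rw [min_eq_right (by omega)]
    split_ifs <;> omega

lemma rungLabel_antitone (n : ℕ) : Antitone (rungLabel n) := by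
  intro i j h
  unfold rungLabel
  split_ifs <;> omega

lemma ladder_label_inj {n i j i' j' : ℕ} (hn : 3 ≤ n) (hi : i < 2 * n) (hj : j < 2 * n)
    (hi' : i' < 2 * n) (hj' : j' < 2 * n) (h : i = j ∨ j = i + 1 ∨ i = j + 1)
    (h' : i' = j' ∨ j' = i' + 1 ∨ i' = j' + 1)
    (he : highLabel n j - lowLabel n i = highLabel n j' - lowLabel n i') : i = i' ∧ j = j' := by
  obtain ⟨p1, p2, -, -⟩ := ladder_label_block hn hi hj h
  -- Equal labels lie in the same block, so the edges agree in `min i j`.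
  obtain ⟨q1, q2, -, -⟩ := ladder_label_block hn hi' hj' h'
  have hm : min i j = min i' j' := by
    rcases lt_trichotomy (min i j) (min i' j') with hlt | heq | hlt
    · have := rungLabel_antitone n (Nat.succ_le_of_lt hlt)
      simp only [Nat.succ_eq_add_one] at this
      omega
    · exact heq
    · have := rungLabel_antitone n (Nat.succ_le_of_lt hlt)
      simp only [Nat.succ_eq_add_one] at this
      omega
  clear p1 p2 q1 q2
  obtain ⟨m, hc, hc'⟩ : ∃ m,
      ((i = m ∧ j = m) ∨ (i = m ∧ j = m + 1) ∨ (i = m + 1 ∧ j = m)) ∧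
      ((i' = m ∧ j' = m) ∨ (i' = m ∧ j' = m + 1) ∨ (i' = m + 1 ∧ j' = m)) :=
    ⟨min i j, by omega, by omega⟩
  unfold highLabel lowLabel at he
  rcases hc with ⟨rfl, rfl⟩ | ⟨rfl, rfl⟩ | ⟨rfl, rfl⟩ <;>
    rcases hc' with ⟨rfl, rfl⟩ | ⟨rfl, rfl⟩ | ⟨rfl, rfl⟩ <;>
    first
    | exact ⟨rfl, rfl⟩
    | (exfalso; split_ifs at he <;> omega)

/-- For every `n ≥ 2`, the prism `D_{2n}` has an α-valuation: an injection
`f : V(D_{2n}) → {0, 1, …, 6n}` with pairwise distinct edge labels `|f u − f v|`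
and an integer `λ` with `min {f u, f v} ≤ λ < max {f u, f v}` for every edge `uv`. -/
theorem prism_has_alpha_valuation (n : ℕ) (hn : 2 ≤ n) :
    ∃ f : Fin (2 * n) × Fin 2 → ℕ, Function.Injective f ∧
      (∀ v, f v ≤ 6 * n) ∧
      Set.InjOn (edgeDiff f) (prism (2 * n)).edgeSet ∧
      ∃ lam : ℕ, ∀ u v, (prism (2 * n)).Adj u v →
        min (f u) (f v) ≤ lam ∧ lam < max (f u) (f v) := by
  obtain rfl | hn3 : n = 2 ∨ 3 ≤ n := by omega
  · -- The cube: columns `(0, 6), (1, 12), (2, 10), (3, 4)`.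
    refine exists_alpha_of_columns 2 3 id
      (fun i => if i = 0 then 6 else if i = 1 then 12 else if i = 2 then 10 else 4) ?_ ?_ ?_ ?_
    · decide
    · decide
    · decide
    · intro i hi j hj i' hi' j' hj' hc hc' he
      unfold ColumnsClose at hc hc'
      dsimp only [id] at he
      split_ifs at he <;> omega
  · refine exists_alpha_of_columns n (3 * n - 4) (lowLabel n) (highLabel n) ?_ ?_ ?_ ?_
    · intro i hi j hj h
      unfold lowLabel at h
      split_ifs at h <;> omega
    · intro i hi j hj h
      unfold highLabel at h
      split_ifs at h <;> omega
    · intro i hi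
      unfold lowLabel highLabel
      split_ifs <;> omega
    · have w1 : highLabel n (2 * n - 1) - lowLabel n 0 = 3 * n - 3 := by
        unfold lowLabel highLabel
        split_ifs <;> omega
      have w2 : highLabel n 0 - lowLabel n (2 * n - 1) = 3 * n + 4 := by
        unfold lowLabel highLabel
        split_ifs <;> omega
      have split : ∀ i j, ColumnsClose n i j → (i = j ∨ j = i + 1 ∨ i = j + 1) ∨
          (i = 0 ∧ j = 2 * n - 1) ∨ (i = 2 * n - 1 ∧ j = 0) := by
        unfold ColumnsClose
        omega
      intro i hi j hj i' hi' j' hj' hc hc' he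
      rcases split i j hc with h | h | h <;> rcases split i' j' hc' with h' | h' | h'
      · exact ladder_label_inj hn3 hi hj hi' hj' h h' he
      · have := ladder_label_block hn3 hi hj h
        rw [h'.1, h'.2] at he
        omega
      · have := ladder_label_block hn3 hi hj h
        rw [h'.1, h'.2] at he
        omega
      · have := ladder_label_block hn3 hi' hj' h'
        rw [h.1, h.2] at he
        omega
      · omega
      · rw [h.1, h.2, h'.1, h'.2] at he
        omega
      · have := ladder_label_block hn3 hi' hj' h'
        rw [h.1, h.2] at he
        omega
      · rw [h.1, h.2, h'.1, h'.2] at he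
        omega
      · omega
end

section
/- Let G be a graph of order p and size q without isolated vertices that admits an α-valuation. Then μ_s(G) ≤ q − p + 1; that is, there exists an injective function f : V(G) → {1, 2, ..., q + 1} such that the sums f(u) + f(v) over the edges uv of G are pairwise distinct and form a set of q consecutive integers. -/
/-- The labelling obtained from `f` by reversing the labels `0, …, lam` and then shifting all labels
up by one. -/
def reflectLow {V : Type*} (f : V → ℕ) (lam : ℕ) (v : V) : ℕ :=
  if f v ≤ lam then lam + 1 - f v else f v + 1

/-- On a pair separated by the threshold `lam`, sums after reflection are translates of the original
differences. -/
lemma edgeSum_reflectLow {V : Type*} (f : V → ℕ) (lam : ℕ) (u v : V)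
    (h : min (f u) (f v) ≤ lam ∧ lam < max (f u) (f v)) :
    edgeSum (reflectLow f lam) s(u, v) = edgeDiff f s(u, v) + (lam + 2) := by
  simp only [edgeSum, edgeDiff, Sym2.lift_mk, reflectLow]
  split_ifs <;> omega

/-- If a graph `G` of order `p` and size `q` without isolated vertices has an
α-valuation, then `μₛ(G) ≤ q − p + 1`: there is an injection `g : V(G) → [1, q+1]`
whose edge sums are pairwise distinct and form `q` consecutive integers. -/
theorem alpha_valuation_deficiency_bound {V : Type*} [Fintype V]
    (G : SimpleGraph V) (p q : ℕ)
    (hp : p = Fintype.card V) (hq : q = G.edgeSet.ncard)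
    (hiso : ∀ v : V, ∃ u, G.Adj u v)
    (f : V → ℕ) (hf : Function.Injective f) (hfb : ∀ v, f v ≤ q)
    (hinj : Set.InjOn (edgeDiff f) G.edgeSet)
    (lam : ℕ)
    (hlam : ∀ u v, G.Adj u v → min (f u) (f v) ≤ lam ∧ lam < max (f u) (f v)) :
    ∃ g : V → ℕ, Function.Injective g ∧ (∀ v, g v ∈ Set.Icc 1 (q + 1)) ∧
      ∃ c : ℕ, Set.BijOn (edgeSum g) G.edgeSet (Set.Icc c (c + q - 1)) := by
  have key : ∀ e ∈ G.edgeSet,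
      edgeSum (reflectLow f lam) e = edgeDiff f e + (lam + 2) := by
    intro e he
    induction e with
    | _ u v => exact edgeSum_reflectLow f lam u v (hlam u v he)
  have hdiff : ∀ e ∈ G.edgeSet, 1 ≤ edgeDiff f e ∧ edgeDiff f e ≤ q := by
    intro e he
    induction e with
    | _ u v =>
      have h := hlam u v he
      have hu := hfb u
      have hv := hfb v
      simp only [edgeDiff, Sym2.lift_mk]
      omega
  refine ⟨reflectLow f lam, ?_, ?_, lam + 3, ?_⟩
  · intro u v huv
    apply hf
    simp only [reflectLow] at huv
    split_ifs at huv <;> omega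
  · intro v
    -- An edge at `v` forces `lam < q`, so reflected labels do not exceed `q + 1`.
    obtain ⟨u, huv⟩ := hiso v
    have h := hlam u v huv
    have hu := hfb u
    have hv := hfb v
    simp only [reflectLow, Set.mem_Icc]
    split_ifs <;> omega
  · have hmaps : Set.MapsTo (edgeSum (reflectLow f lam)) G.edgeSet
        (Set.Icc (lam + 3) (lam + 3 + q - 1)) := by
      intro e he
      have h := hdiff e he
      rw [key e he, Set.mem_Icc]
      omega
    have hinj' : Set.InjOn (edgeSum (reflectLow f lam)) G.edgeSet := by
      intro e he e' he' h
      rw [key e he, key e' he'] at h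
      exact hinj he he' (Nat.add_right_cancel h)
    refine ⟨hmaps, hinj', ?_⟩
    -- Surjectivity by counting: both sets have `q` elements.
    have himg : edgeSum (reflectLow f lam) '' G.edgeSet =
        Set.Icc (lam + 3) (lam + 3 + q - 1) := by
      apply Set.eq_of_subset_of_ncard_le hmaps.image_subset
      · rw [hinj'.ncard_image, ← hq, ← Finset.coe_Icc, Set.ncard_coe_finset, Nat.card_Icc]
        omega
    exact himg.ge
end

section
/- For every tree T of order n ≥ 2, the strength of T equals n + 1; that is, the minimum over all bijections f : V(T) → {1, 2, ..., n} of the maximum edge sum max{ f(u) + f(v) : uv ∈ E(T) } is exactly n + 1. -/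
/-!
The lower bound is immediate: in a connected graph with at least two vertices the vertex numbered
`n` has a neighbour, whose number is at least `1`.

For the upper bound, every finite forest of order `n` has a numbering with all edge sums at most
`n + 1`, by induction on the order (`exists_numbering`, stated for the forests induced on finite
vertex sets `s`, so that vertices can be deleted without changing the type). A nonempty forest has
vertices `v`, `p` such that `v` has no neighbour other than `p` (`exists_adj_imp_eq`, applied to the
induced forest; possibly `p = v`, or `v` and `p` are not adjacent). Suppose first that `p ≠ v`.
Give `v` the number `n` and `p` the number `1`, delete both, number the remaining forest of order
`n - 2` inductively and shift its numbers up by one: the old edge sums were at most `n - 1` and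
become at most `n + 1`, while every edge at `p` has sum at most `1 + n`. If `p = v`, then
`v` is isolated; only `v` is deleted and no shift is needed.
-/

/-- A finite nonempty forest has a vertex with at most one neighbour: the first vertex of a
longest path, whose only possible neighbour is the second vertex of that path. -/
theorem exists_adj_imp_eq {W : Type*} [Finite W] [Nonempty W] (G : SimpleGraph W)
    (h : G.IsAcyclic) : ∃ v p : W, ∀ w, G.Adj v w → w = p := by
  obtain ⟨u, v, p, hp, hmax⟩ :=
    SimpleGraph.Walk.exists_isPath_forall_isPath_length_le_length G
  refine ⟨u, p.snd, fun w hadj ↦ ?_⟩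
  apply h.eq_snd_of_adj_start hp hadj
  have : ¬(p.cons hadj.symm).IsPath := by grind [SimpleGraph.Walk.length_cons]
  grind [hp.cons]

/-- A forest induced on `s` has a numbering with all edge sums at most `s.card + 1`. An injective
map of `s` into `[1, s.card]` is automatically bijective, so only injectivity is recorded. -/
theorem exists_numbering {V : Type*} (T : SimpleGraph V) (h : T.IsAcyclic) (m : ℕ) :
    ∀ s : Finset V, s.card = m → ∃ f : V → ℕ, Set.InjOn f s ∧
      (∀ v ∈ s, 1 ≤ f v ∧ f v ≤ m) ∧
      ∀ u ∈ s, ∀ v ∈ s, T.Adj u v → f u + f v ≤ m + 1 := by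
  classical
  induction m using Nat.strong_induction_on with
  | _ m ih =>
  intro s hs
  rcases s.eq_empty_or_nonempty with rfl | hne
  · exact ⟨fun _ ↦ 0, by simp, by simp, by simp⟩
  have hne' : Nonempty (s : Set V) := hne.to_subtype
  obtain ⟨⟨v, hv⟩, ⟨p, hp⟩, hvp⟩ := exists_adj_imp_eq (T.induce (s : Set V)) (h.induce _)
  have hv : v ∈ s := hv
  have hp : p ∈ s := hp
  have huniq : ∀ w ∈ s, T.Adj v w → w = p := fun w hw hadj ↦
    congrArg Subtype.val (hvp ⟨w, hw⟩ hadj)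
  have hpos : 0 < s.card := hne.card_pos
  have hcard : (s.erase v).card = m - 1 := by rw [Finset.card_erase_of_mem hv, hs]
  by_cases hpv : p = v
  · -- `v` would be its own only neighbour, so it is isolated in `s`.
    have hiso : ∀ w ∈ s, ¬ T.Adj v w := fun w hw hadj ↦
      hadj.ne ((huniq w hw hadj).trans hpv).symm
    obtain ⟨g, hinj, hran, hsum⟩ := ih (m - 1) (by omega) (s.erase v) hcard
    have hinj' : ∀ a ∈ s, a ≠ v → ∀ b ∈ s, b ≠ v → g a = g b → a = b := fun a ha hav b hb hbv e ↦
      hinj (by simp [ha, hav]) (by simp [hb, hbv]) e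
    refine ⟨fun x ↦ if x = v then m else g x, ?_, ?_, ?_⟩
    · intro a ha b hb hab
      have ha : a ∈ s := ha
      have hb : b ∈ s := hb
      grind
    · grind
    · intro a ha b hb hab
      have := hiso b hb
      have := hiso a ha
      have := hab.symm
      grind
  · have hps : p ∈ s.erase v := by simp [hp, hpv]
    have hcard2 : ((s.erase v).erase p).card = m - 2 := by
      rw [Finset.card_erase_of_mem hps, hcard]; omega
    have hm2 : 2 ≤ m := by
      have := Finset.card_pos.mpr ⟨p, hps⟩
      omega
    obtain ⟨g, hinj, hran, hsum⟩ := ih (m - 2) (by omega) _ hcard2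
    have hinj' : ∀ a ∈ s, a ≠ v → a ≠ p → ∀ b ∈ s, b ≠ v → b ≠ p → g a = g b → a = b :=
      fun a ha hav hap b hb hbv hbp e ↦
        hinj (by simp [ha, hav, hap]) (by simp [hb, hbv, hbp]) e
    refine ⟨fun x ↦ if x = v then m else if x = p then 1 else g x + 1, ?_, ?_, ?_⟩
    · intro a ha b hb hab
      have ha : a ∈ s := ha
      have hb : b ∈ s := hb
      grind
    · grind
    · intro a ha b hb hab
      have := huniq b hb
      have := huniq a ha
      have := hab.symm
      have := hab.ne
      grind

/-- For every tree `T` of order `n ≥ 2`, the strength of `T` is exactly `n + 1`: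
some numbering `f : V(T) → [1, n]` has all edge sums at most `n + 1`, and every
numbering has some edge sum at least `n + 1`. -/
theorem strength_of_tree {V : Type*} [Fintype V] (T : SimpleGraph V) (n : ℕ)
    (hn : n = Fintype.card V) (h2 : 2 ≤ n)
    (hconn : T.Connected) (hacyc : T.IsAcyclic) :
    (∃ f : V → ℕ, Set.BijOn f Set.univ (Set.Icc 1 n) ∧
      ∀ u v, T.Adj u v → f u + f v ≤ n + 1) ∧
    (∀ f : V → ℕ, Set.BijOn f Set.univ (Set.Icc 1 n) →
      ∃ u v, T.Adj u v ∧ n + 1 ≤ f u + f v) := by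
  constructor
  · obtain ⟨f, hinj, hran, hsum⟩ := exists_numbering T hacyc n Finset.univ
      (by rw [hn, Finset.card_univ])
    refine ⟨f, ⟨fun v _ ↦ hran v (Finset.mem_univ v), by simpa using hinj, ?_⟩,
      fun u v ↦ hsum u (Finset.mem_univ u) v (Finset.mem_univ v)⟩
    have := Finset.surjOn_of_injOn_of_card_le (s := Finset.univ) (t := Finset.Icc 1 n) f
      (fun v _ ↦ by simpa using hran v (Finset.mem_univ v)) hinj (by simp [hn])
    simpa using this
  · intro f hf
    obtain ⟨u, -, hu⟩ := hf.surjOn (show n ∈ Set.Icc 1 n from ⟨by omega, le_rfl⟩)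
    have : Nontrivial V := Fintype.one_lt_card_iff_nontrivial.mp (by omega)
    obtain ⟨v, huv⟩ := hconn.preconnected.exists_adj_of_nontrivial u
    have := (hf.mapsTo (Set.mem_univ v)).1
    exact ⟨u, v, huv, by omega⟩
end

section
/- If T is a tree of order n ≥ 3 that is super edge-magic, then T is harmonious: there exists a function f from V(T) to the integers modulo n − 1 such that the induced edge labels f(u) + f(v) (mod n − 1) over the n − 1 edges uv of T are pairwise distinct, and f is injective except that at most one label value is used by two vertices. -/
/-- The induced edge label `f u + f v` of an unordered pair, valued in `ZMod m`. -/
def edgeSumZMod {V : Type*} {m : ℕ} (f : V → ZMod m) : Sym2 V → ZMod m :=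
  Sym2.lift ⟨fun a b => f a + f b, fun a b => add_comm (f a) (f b)⟩

/-- The cast to `ZMod m` restricted to `m + 1` consecutive integers identifies only the two
endpoints. -/
lemma eq_or_extremes_of_natCast_eq {m c a b : ℕ} (ha : c ≤ a) (hb : c ≤ b)
    (ha' : a ≤ c + m) (hb' : b ≤ c + m) (h : (a : ZMod m) = b) :
    a = b ∨ (a = c ∧ b = c + m) ∨ (b = c ∧ a = c + m) := by
  have key : ∀ {x y : ℕ}, x ≤ y → c ≤ x → y ≤ c + m → (x : ZMod m) = y →
      x = y ∨ (x = c ∧ y = c + m) := by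
    intro x y hxy hx hy hmod
    rw [ZMod.natCast_eq_natCast_iff] at hmod
    have hdvd : m ∣ y - x := (Nat.modEq_iff_dvd' hxy).1 hmod
    rcases Nat.eq_zero_or_pos (y - x) with h0 | hpos
    · left; omega
    · have := Nat.le_of_dvd hpos hdvd
      right; omega
  rcases le_total a b with hab | hab
  · rcases key hab ha hb' h with h | h <;> tauto
  · rcases key hab hb ha' h.symm with h | h
    · exact Or.inl h.symm
    · tauto

lemma edgeSumZMod_natCast {V : Type*} {m : ℕ} (f : V → ℕ) (e : Sym2 V) :
    edgeSumZMod (fun v => (f v : ZMod m)) e = (edgeSum f e : ZMod m) := by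
  induction e with
  | _ a b => simp [edgeSumZMod, edgeSum]

/-- If a tree `T` of order `n ≥ 3` is super edge-magic, then `T` is harmonious:
there is a labeling `f : V(T) → ℤ/(n−1)ℤ` whose `n − 1` edge labels
`f u + f v (mod n−1)` are pairwise distinct, and `f` is injective except that at
most one label value is used by two vertices. -/
theorem super_edge_magic_tree_is_harmonious {V : Type*} [Fintype V]
    (T : SimpleGraph V) (n : ℕ) (hn : n = Fintype.card V) (h3 : 3 ≤ n)
    (hconn : T.Connected) (hacyc : T.IsAcyclic)
    (hsem : ∃ f : V → ℕ, Set.BijOn f Set.univ (Set.Icc 1 n) ∧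
      ∃ c : ℕ, Set.BijOn (edgeSum f) T.edgeSet (Set.Icc c (c + (n - 1) - 1))) :
    ∃ f : V → ZMod (n - 1),
      Set.InjOn (edgeSumZMod f) T.edgeSet ∧
      (∀ u v w x : V, u ≠ v → w ≠ x → f u = f v → f w = f x → s(u, v) = s(w, x)) := by
  obtain ⟨f, hf, c, hc⟩ := hsem
  refine ⟨fun v => (f v : ZMod (n - 1)), ?_, ?_⟩
  · intro e he e' he' h
    rw [edgeSumZMod_natCast, edgeSumZMod_natCast] at h
    obtain ⟨h1, h2⟩ := hc.mapsTo he
    obtain ⟨h1', h2'⟩ := hc.mapsTo he'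
    refine hc.injOn he he' ?_
    -- `c + (n - 1)` is not an edge sum, so the two extremes never both occur.
    have := eq_or_extremes_of_natCast_eq h1 h1' (by omega) (by omega) h
    omega
  · have hinj : ∀ {a b : V}, f a = f b → a = b :=
      fun h => hf.injOn (Set.mem_univ _) (Set.mem_univ _) h
    have key : ∀ {a b : V}, a ≠ b → (f a : ZMod (n - 1)) = f b →
        (f a = 1 ∧ f b = n) ∨ (f b = 1 ∧ f a = n) := by
      intro a b hab h
      obtain ⟨h1, h2⟩ := hf.mapsTo (Set.mem_univ a)
      obtain ⟨h1', h2'⟩ := hf.mapsTo (Set.mem_univ b)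
      have hne : f a ≠ f b := fun h => hab (hinj h)
      have := eq_or_extremes_of_natCast_eq h1 h1' (by omega) (by omega) h
      omega
    intro u v w x huv hwx h h'
    rw [Sym2.eq_iff]
    rcases key huv h with ⟨p, q⟩ | ⟨p, q⟩ <;> rcases key hwx h' with ⟨r, s⟩ | ⟨r, s⟩
    · exact Or.inl ⟨hinj (p.trans r.symm), hinj (q.trans s.symm)⟩
    · exact Or.inr ⟨hinj (p.trans r.symm), hinj (q.trans s.symm)⟩
    · exact Or.inr ⟨hinj (q.trans s.symm), hinj (p.trans r.symm)⟩
    · exact Or.inl ⟨hinj (q.trans s.symm), hinj (p.trans r.symm)⟩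
end

section
/- For every integer n ≥ 4 with n ≡ 0 (mod 4), the prism D_n satisfies μ_s(D_n) ≤ 3n/2 − 1; that is, there exists an injective function f : V(D_n) → {1, 2, ..., 2n + 3n/2 − 1} such that the sums f(u) + f(v) over the 3n edges of D_n are pairwise distinct and form a set of 3n consecutive integers. -/
/-- Label (before shifting) of the even vertex of column `i`: steps `2` (`p` times), `1`, `2`,
and then `1`. -/
def xLabel (p i : ℕ) : ℕ :=
  if i ≤ p then 2 * i else if i = p + 1 then 2 * p + 1 else p + 1 + i

/-- Label (before shifting) of the odd vertex of column `i`: steps `1` (`p` times), `4`, `1`,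
and then `2`. -/
def yLabel (p i : ℕ) : ℕ :=
  if i ≤ p then i else if i = p + 1 then p + 4 else 2 * i - p + 1

/-- The even vertex of column `i` is adjacent to the odd vertex of column `j` in `D_{2p+2}`. -/
def ColAdj (p i j : ℕ) : Prop :=
  i = j ∨ j = i + 1 ∨ i = j + 1 ∨ (i = 0 ∧ j = 2 * p + 1) ∨ (i = 2 * p + 1 ∧ j = 0)

/-- The columns of the edge with sum `s`, as a pair (column of the even endpoint, column of the
odd endpoint). -/
def edgeOfSum (p s : ℕ) : ℕ × ℕ :=
  if s ≤ 3 * p then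
    (if s % 3 = 0 then (s / 3, s / 3) else
      if s % 3 = 1 then (s / 3, s / 3 + 1) else (s / 3 + 1, s / 3))
  else if s = 3 * p + 1 then (p + 1, p)
  else if s = 3 * p + 2 then (2 * p + 1, 0)
  else if s = 3 * p + 3 then (0, 2 * p + 1)
  else if s = 3 * p + 4 then (p, p + 1)
  else if s = 3 * p + 5 then (p + 1, p + 1)
  else if s = 3 * p + 6 then (p + 1, p + 2)
  else if s = 3 * p + 7 then (p + 2, p + 1)
  else
    (if s % 3 = 2 then (s / 3, s / 3) else
      if s % 3 = 0 then (s / 3, s / 3 - 1) else (s / 3 - 1, s / 3))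

lemma xLabel_cases (p i : ℕ) :
    (i ≤ p ∧ xLabel p i = 2 * i) ∨ (i = p + 1 ∧ xLabel p i = 2 * p + 1) ∨
      (p + 1 < i ∧ xLabel p i = p + 1 + i) := by
  unfold xLabel
  split_ifs <;> omega

lemma yLabel_cases (p j : ℕ) :
    (j ≤ p ∧ yLabel p j = j) ∨ (j = p + 1 ∧ yLabel p j = p + 4) ∨
      (p + 1 < j ∧ yLabel p j + p = 2 * j + 1) := by
  unfold yLabel
  split_ifs <;> omega

/-- `edgeOfSum` is a left inverse of the edge sum: distinct edges have distinct sums. -/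
lemma edgeOfSum_label {p i j : ℕ} (hp : 1 ≤ p) (hi : i < 2 * p + 2) (hj : j < 2 * p + 2)
    (h : ColAdj p i j) : edgeOfSum p (xLabel p i + yLabel p j) = (i, j) := by
  have hx := xLabel_cases p i
  have hy := yLabel_cases p j
  obtain ⟨s, hs⟩ : ∃ s, s = xLabel p i + yLabel p j := ⟨_, rfl⟩
  rw [← hs]
  generalize xLabel p i = x at *
  generalize yLabel p j = y at *
  rcases h with h | h | h | h | h <;> rcases hx with hx | hx | hx <;>
    rcases hy with hy | hy | hy <;>
    first
      | (exfalso; omega)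
      | (unfold edgeOfSum
         repeat first | rw [if_pos (by omega)] | rw [if_neg (by omega)]
         rw [Prod.mk.injEq]
         omega)

/-- `edgeOfSum` is a right inverse of the edge sum: every value below `3n` is attained. -/
lemma label_edgeOfSum {p s i j : ℕ} (hp : 1 ≤ p) (hs : s < 6 * p + 6)
    (h : edgeOfSum p s = (i, j)) :
    i < 2 * p + 2 ∧ j < 2 * p + 2 ∧ ColAdj p i j ∧ xLabel p i + yLabel p j = s := by
  have key : i < 2 * p + 2 ∧ j < 2 * p + 2 ∧ ColAdj p i j := by
    unfold edgeOfSum at h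
    unfold ColAdj
    repeat' split at h
    all_goals rw [Prod.mk.injEq] at h; omega
  refine ⟨key.1, key.2.1, key.2.2, ?_⟩
  have hx := xLabel_cases p i
  have hy := yLabel_cases p j
  generalize xLabel p i = x at *
  generalize yLabel p j = y at *
  clear key
  unfold edgeOfSum at h
  repeat' split at h
  all_goals rw [Prod.mk.injEq] at h; omega

lemma label_sum_lt {p i j : ℕ} (hi : i < 2 * p + 2) (hj : j < 2 * p + 2) :
    xLabel p i + yLabel p j < 6 * p + 6 := by
  unfold xLabel yLabel
  split_ifs <;> omega

/-- The vertex labelling of `D_{2p+2}`: the labels of the odd class are shifted past those of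
the even class, whose maximum is `3p + 3`. -/
def prismLabel (p : ℕ) (v : Fin (2 * p + 2) × Fin 2) : ℕ :=
  if (v.1.val + v.2.val) % 2 = 0 then xLabel p v.1.val + 1 else yLabel p v.1.val + (3 * p + 4)

/-- The even vertex of column `i`. -/
def evenVertex {n : ℕ} (i : Fin n) : Fin n × Fin 2 := (i, ⟨i.val % 2, by omega⟩)

/-- The odd vertex of column `i`. -/
def oddVertex {n : ℕ} (i : Fin n) : Fin n × Fin 2 := (i, ⟨(i.val + 1) % 2, by omega⟩)

lemma prismLabel_even (p : ℕ) (i : Fin (2 * p + 2)) :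
    prismLabel p (evenVertex i) = xLabel p i + 1 := by
  unfold prismLabel evenVertex
  rw [if_pos]
  simp only
  omega

lemma prismLabel_odd (p : ℕ) (i : Fin (2 * p + 2)) :
    prismLabel p (oddVertex i) = yLabel p i + (3 * p + 4) := by
  unfold prismLabel oddVertex
  rw [if_neg]
  simp only
  omega

lemma eq_even_or_odd {n : ℕ} (v : Fin n × Fin 2) :
    v = evenVertex v.1 ∨ v = oddVertex v.1 := by
  obtain ⟨i, j⟩ := v
  simp only [evenVertex, oddVertex, Prod.mk.injEq, Fin.ext_iff, true_and]
  omega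

lemma cycle_adj_iff (p : ℕ) (i j : Fin (2 * p + 2)) :
    (SimpleGraph.cycleGraph (2 * p + 2)).Adj i j ↔
      (j.val = i.val + 1 ∨ i.val = j.val + 1 ∨ (i.val = 0 ∧ j.val = 2 * p + 1) ∨
        (i.val = 2 * p + 1 ∧ j.val = 0)) := by
  have hi := i.isLt
  have hj := j.isLt
  have key : ∀ a b : Fin (2 * p + 2), (a - b).val = 1 ↔
      (a.val = b.val + 1 ∨ (a.val = 0 ∧ b.val = 2 * p + 1)) := by
    intro a b
    have ha := a.isLt
    have hb := b.isLt
    rw [Fin.sub_def]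
    change (2 * p + 2 - b.val + a.val) % (2 * p + 2) = 1 ↔ _
    rcases le_or_gt b.val a.val with h | h
    · rw [Nat.mod_eq_sub_mod (by omega), Nat.mod_eq_of_lt (by omega)]
      omega
    · rw [Nat.mod_eq_of_lt (by omega)]
      omega
  rw [SimpleGraph.cycleGraph_adj', key, key]
  omega

lemma prism_adj_even_odd (p : ℕ) (i j : Fin (2 * p + 2)) :
    (prism (2 * p + 2)).Adj (evenVertex i) (oddVertex j) ↔ ColAdj p i j := by
  have hi := i.isLt
  have hj := j.isLt
  rw [prism, SimpleGraph.boxProd_adj, cycle_adj_iff]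
  simp only [evenVertex, oddVertex, SimpleGraph.top_adj, ne_eq, Fin.ext_iff, ColAdj]
  omega

lemma prism_not_adj_even_even (p : ℕ) (i j : Fin (2 * p + 2)) :
    ¬ (prism (2 * p + 2)).Adj (evenVertex i) (evenVertex j) := by
  rw [prism, SimpleGraph.boxProd_adj, cycle_adj_iff]
  simp only [evenVertex, SimpleGraph.top_adj, ne_eq, Fin.ext_iff]
  omega

lemma prism_not_adj_odd_odd (p : ℕ) (i j : Fin (2 * p + 2)) :
    ¬ (prism (2 * p + 2)).Adj (oddVertex i) (oddVertex j) := by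
  rw [prism, SimpleGraph.boxProd_adj, cycle_adj_iff]
  simp only [oddVertex, SimpleGraph.top_adj, ne_eq, Fin.ext_iff]
  omega

lemma exists_of_mem_edgeSet {p : ℕ} {e : Sym2 (Fin (2 * p + 2) × Fin 2)}
    (he : e ∈ (prism (2 * p + 2)).edgeSet) :
    ∃ i j : Fin (2 * p + 2), ColAdj p i j ∧ e = s(evenVertex i, oddVertex j) := by
  induction e using Sym2.ind with
  | _ a b =>
    rw [SimpleGraph.mem_edgeSet] at he
    rcases eq_even_or_odd a with ha | ha <;> rcases eq_even_or_odd b with hb | hb <;>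
      rw [ha, hb] at he
    · exact absurd he (prism_not_adj_even_even p _ _)
    · exact ⟨a.1, b.1, (prism_adj_even_odd p _ _).1 he, by rw [← ha, ← hb]⟩
    · exact ⟨b.1, a.1, (prism_adj_even_odd p _ _).1 he.symm, by
        rw [← ha, ← hb]; exact Sym2.eq_swap⟩
    · exact absurd he (prism_not_adj_odd_odd p _ _)

lemma edgeSum_even_odd (p : ℕ) (i j : Fin (2 * p + 2)) :
    edgeSum (prismLabel p) s(evenVertex i, oddVertex j) =
      3 * p + 5 + (xLabel p i + yLabel p j) := by
  change prismLabel p (evenVertex i) + prismLabel p (oddVertex j) = _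
  rw [prismLabel_even, prismLabel_odd]
  omega

lemma xLabel_injective {p i j : ℕ} (h : xLabel p i = xLabel p j) : i = j := by
  unfold xLabel at h
  split_ifs at h <;> omega

lemma yLabel_injective {p i j : ℕ} (h : yLabel p i = yLabel p j) : i = j := by
  unfold yLabel at h
  split_ifs at h <;> omega

lemma xLabel_le {p i : ℕ} (hi : i < 2 * p + 2) : xLabel p i ≤ 3 * p + 2 := by
  unfold xLabel
  split_ifs <;> omega

lemma yLabel_le {p i : ℕ} (hp : 1 ≤ p) (hi : i < 2 * p + 2) :
    yLabel p i ≤ 3 * p + 3 := by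
  unfold yLabel
  split_ifs <;> omega

lemma prismLabel_injective (p : ℕ) : Function.Injective (prismLabel p) := by
  intro a b h
  have hxa := xLabel_le a.1.isLt
  have hxb := xLabel_le b.1.isLt
  rcases eq_even_or_odd a with ha | ha <;> rcases eq_even_or_odd b with hb | hb <;>
    rw [ha, hb] at h <;> simp only [prismLabel_even, prismLabel_odd] at h
  · rw [ha, hb, Fin.ext (xLabel_injective (Nat.add_right_cancel h))]
  · omega
  · omega
  · rw [ha, hb, Fin.ext (yLabel_injective (Nat.add_right_cancel h))]

/-- For every `n ≥ 4` with `n ≡ 0 (mod 4)`, `μₛ(D_n) ≤ 3n/2 − 1`: there is an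
injection `f : V(D_n) → [1, 2n + 3n/2 − 1]` whose `3n` edge sums are pairwise
distinct and form `3n` consecutive integers. -/
theorem prism_deficiency_le_of_four_dvd (n : ℕ) (hn : 4 ≤ n) (hmod : n % 4 = 0) :
    ∃ f : Fin n × Fin 2 → ℕ, Function.Injective f ∧
      (∀ v, f v ∈ Set.Icc 1 (2 * n + 3 * n / 2 - 1)) ∧
      ∃ c : ℕ, Set.BijOn (edgeSum f) (prism n).edgeSet (Set.Icc c (c + 3 * n - 1)) := by
  obtain ⟨p, rfl⟩ : ∃ p, n = 2 * p + 2 := ⟨n / 2 - 1, by omega⟩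
  have hp : 1 ≤ p := by omega
  refine ⟨prismLabel p, prismLabel_injective p, ?_, 3 * p + 5, ?_, ?_, ?_⟩
  · intro v
    have hx := xLabel_le v.1.isLt
    have hy := yLabel_le hp v.1.isLt
    rw [Set.mem_Icc]
    rcases eq_even_or_odd v with hv | hv <;> rw [hv] <;>
      simp only [prismLabel_even, prismLabel_odd] <;> omega
  · intro e he
    obtain ⟨i, j, -, rfl⟩ := exists_of_mem_edgeSet he
    have := label_sum_lt i.isLt j.isLt
    rw [edgeSum_even_odd, Set.mem_Icc]
    omega
  · intro e he e' he' h
    obtain ⟨i, j, hij, rfl⟩ := exists_of_mem_edgeSet he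
    obtain ⟨i', j', hij', rfl⟩ := exists_of_mem_edgeSet he'
    rw [edgeSum_even_odd, edgeSum_even_odd] at h
    have h1 := edgeOfSum_label hp i.isLt j.isLt hij
    rw [Nat.add_left_cancel h, edgeOfSum_label hp i'.isLt j'.isLt hij', Prod.mk.injEq] at h1
    rw [Fin.ext h1.1, Fin.ext h1.2]
  · intro s hs
    rw [Set.mem_Icc] at hs
    obtain ⟨hi, hj, hadj, hsum⟩ := label_edgeOfSum (p := p) (s := s - (3 * p + 5)) hp (by omega) rfl
    refine ⟨s(evenVertex ⟨_, hi⟩, oddVertex ⟨_, hj⟩), ?_, ?_⟩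
    · rw [SimpleGraph.mem_edgeSet, prism_adj_even_odd]
      exact hadj
    · rw [edgeSum_even_odd]
      simp only [hsum]
      omega
end

section
/- For every integer n ≥ 5, the complete graph K_n has infinite super edge-magic deficiency: there is no injective function f from the n vertices of K_n into the positive integers such that the C(n,2) pairwise sums f(u) + f(v) over distinct vertices u, v are pairwise distinct and form a set of consecutive integers; equivalently, K_n ∪ kK₁ is not super edge-magic for any nonnegative integer k. -/
/-- The theorem for labels listed increasingly as `a 0 < ⋯ < a (m + 4)`, with `N` the number of
consecutive sums; only `2 ≤ N`, and `N = 10` for five labels, matter. -/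
lemma no_sorted_labelling (m c N : ℕ) (a : ℕ → ℕ) (hN : 2 ≤ N) (hN5 : m = 0 → N = 10)
    (mono : ∀ i j, i < j → j < m + 5 → a i < a j)
    (hA : ∀ i j, i < j → j < m + 5 → c ≤ a i + a j ∧ a i + a j < c + N)
    (hB : ∀ s, c ≤ s → s < c + N → ∃ i j, i < j ∧ j < m + 5 ∧ a i + a j = s)
    (hC : ∀ i j k l, i < j → j < m + 5 → k < l → l < m + 5 → a i + a j = a k + a l →
      i = k ∧ j = l) : False := by
  have mono' : ∀ i j, i ≤ j → j < m + 5 → a i ≤ a j := by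
    intro i j hij hj
    rcases hij.eq_or_lt with rfl | h
    · exact le_rfl
    · exact (mono i j h hj).le
  have h01 : a 0 + a 1 = c := by
    obtain ⟨i, j, hij, hj, hs⟩ := hB c le_rfl (by omega)
    have := mono' 0 i (by omega) (by omega)
    have := mono' 1 j (by omega) hj
    have := hA 0 1 (by omega) (by omega)
    omega
  have h02 : a 0 + a 2 = c + 1 := by
    obtain ⟨i, j, hij, hj, hs⟩ := hB (c + 1) (by omega) (by omega)
    have hj2 : 2 ≤ j := by
      by_contra h
      obtain rfl : j = 1 := by omega
      obtain rfl : i = 0 := by omega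
      omega
    have := mono' 0 i (by omega) (by omega)
    have := mono' 2 j hj2 hj
    have := mono 1 2 (by omega) (by omega)
    omega
  have htop : a (m + 3) + a (m + 4) + 1 = c + N := by
    obtain ⟨i, j, hij, hj, hs⟩ := hB (c + N - 1) (by omega) (by omega)
    have := mono' i (m + 3) (by omega) (by omega)
    have := mono' j (m + 4) (by omega) (by omega)
    have := hA (m + 3) (m + 4) (by omega) (by omega)
    omega
  have htop' : a (m + 2) + a (m + 4) + 2 = c + N := by
    obtain ⟨i, j, hij, hj, hs⟩ := hB (c + N - 2) (by omega) (by omega)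
    have hi : i ≤ m + 2 := by
      by_contra h
      obtain rfl : i = m + 3 := by omega
      obtain rfl : j = m + 4 := by omega
      omega
    have := mono' i (m + 2) hi (by omega)
    have := mono' j (m + 4) (by omega) (by omega)
    have := mono (m + 2) (m + 3) (by omega) (by omega)
    omega
  rcases Nat.eq_zero_or_pos m with rfl | hm
  · have := hN5 rfl
    simp only [Nat.zero_add] at *
    have := mono 0 1 (by omega) (by omega)
    have := mono 3 4 (by omega) (by omega)
    -- The coincidences arising from `a 1 - a 0 = 1, 2, 3, 4` respectively.
    have := hC 1 2 0 3 (by omega) (by omega) (by omega) (by omega)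
    have := hC 2 3 0 4 (by omega) (by omega) (by omega) (by omega)
    have := hC 1 2 0 4 (by omega) (by omega) (by omega) (by omega)
    have := hC 2 3 1 4 (by omega) (by omega) (by omega) (by omega)
    omega
  · have := hC 1 (m + 3) 2 (m + 2) (by omega) (by omega) (by omega) (by omega) (by omega)
    omega

/-- For every `n ≥ 5`, the complete graph `K_n` has infinite super edge-magic
deficiency: no injection of its vertices into the positive integers has pairwise
distinct edge sums forming a set of `C(n,2)` consecutive integers. -/
theorem complete_graph_infinite_deficiency (n : ℕ) (hn : 5 ≤ n) :
    ¬ ∃ f : Fin n → ℕ, Function.Injective f ∧ (∀ v, 0 < f v) ∧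
      ∃ c : ℕ, Set.BijOn (edgeSum f) (⊤ : SimpleGraph (Fin n)).edgeSet
        (Set.Icc c (c + n.choose 2 - 1)) := by
  rintro ⟨f, hf, -, c, hmaps, hinj, hsurj⟩
  obtain ⟨m, rfl⟩ : ∃ m, n = m + 5 := ⟨n - 5, by omega⟩
  have hN : 10 ≤ (m + 5).choose 2 := Nat.choose_le_choose 2 hn
  have hcard : (Finset.univ.image f).card = m + 5 := by
    rw [Finset.card_image_of_injective _ hf, Finset.card_univ, Fintype.card_fin]
  let g := (Finset.univ.image f).orderEmbOfFin hcard
  have hg : ∀ i, ∃ v, f v = g i := by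
    intro i
    obtain ⟨v, -, hv⟩ := Finset.mem_image.1 (Finset.orderEmbOfFin_mem _ hcard i)
    exact ⟨v, hv⟩
  choose σ hσ using hg
  have σinj : Function.Injective σ := by
    intro i j h
    apply g.injective
    rw [← hσ, ← hσ, h]
  have σsurj : Function.Surjective σ := Finite.surjective_of_injective σinj
  have edge : ∀ i j, i < j → s(σ i, σ j) ∈ (⊤ : SimpleGraph (Fin (m + 5))).edgeSet := by
    intro i j h
    simpa using fun e => h.ne (σinj e)
  have esum : ∀ i j, edgeSum f s(σ i, σ j) = g i + g j := by
    intro i j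
    simp [edgeSum, hσ]
  -- Labels are indexed by `ℕ`, with an irrelevant value past the last vertex.
  let a : ℕ → ℕ := fun i => if h : i < m + 5 then g ⟨i, h⟩ else 0
  have ha : ∀ i (h : i < m + 5), a i = g ⟨i, h⟩ := fun i h => dif_pos h
  refine no_sorted_labelling m c ((m + 5).choose 2) a (by omega) (by rintro rfl; rfl) ?_ ?_ ?_ ?_
  · intro i j hij hj
    rw [ha i (by omega), ha j hj]
    exact g.strictMono hij
  · intro i j hij hj
    rw [ha i (by omega), ha j hj, ← esum]
    have := hmaps (edge ⟨i, by omega⟩ ⟨j, hj⟩ hij)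
    rw [Set.mem_Icc] at this
    omega
  · intro s h1 h2
    obtain ⟨e, he, hs⟩ := hsurj (Set.mem_Icc.2 ⟨h1, by omega⟩ : s ∈ Set.Icc c _)
    induction e using Sym2.ind with
    | _ u v =>
      obtain ⟨i, rfl⟩ := σsurj u
      obtain ⟨j, rfl⟩ := σsurj v
      rw [esum] at hs
      have hne : i ≠ j := by
        rintro rfl
        simp at he
      rcases lt_or_gt_of_ne hne with h | h
      · exact ⟨i, j, h, j.2, by rw [ha i i.2, ha j j.2]; exact hs⟩
      · exact ⟨j, i, h, i.2, by rw [ha i i.2, ha j j.2, Nat.add_comm]; exact hs⟩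
  · intro i j k l hij hj hkl hl h
    rw [ha i (by omega), ha j hj, ha k (by omega), ha l hl, ← esum, ← esum] at h
    have := hinj (edge ⟨i, by omega⟩ ⟨j, hj⟩ hij) (edge ⟨k, by omega⟩ ⟨l, hl⟩ hkl) h
    rw [Sym2.eq_iff, σinj.eq_iff, σinj.eq_iff, σinj.eq_iff, σinj.eq_iff] at this
    simp only [Fin.mk.injEq] at this
    omega
end

section
/- The prism D_4 = C_4 □ K₂ (equivalently, the 3-cube Q₃) satisfies μ_s(D_4) = 5: there exists an injective function f : V(D_4) → {1, 2, ..., 13} such that the sums f(u) + f(v) over the 12 edges of D_4 are pairwise distinct and form a set of 12 consecutive integers, but no injective function f : V(D_4) → {1, 2, ..., 12} has this property. -/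
namespace PrismFour

/-- The bit mask of the set `{x, y, z}`. -/
def three (x y z : ℕ) : ℕ := 2 ^ x ||| (2 ^ y ||| 2 ^ z)

/-- A bit mask for the sums forbidden from the start: all numbers in `[0, c + 25]` that are
outside `[c, c + 11]`. -/
def window (c : ℕ) : ℕ := (2 ^ c - 1) ||| ((2 ^ 14 - 1) <<< (c + 12))

/-- Tries every label `b ∈ [1, 12]` for a vertex whose neighbours have label set `m`, where `u` is
the set of forbidden sums and `M` the set of forbidden labels; `k b` says that the branch
of an admissible `b` fails. The value is `true` when every branch fails. -/
def tryAll (u m M : ℕ) (k : ℕ → Bool) : Bool :=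
  [1, 2, 3, 4, 5, 6, 7, 8, 9, 10, 11, 12].all fun b =>
    bif Nat.beq ((m <<< b) &&& u) 0 then
      (bif Nat.beq ((M >>> b) % 2) 0 then k b else true) else true

/-- `true` when, for the labels `w, x, y, z` of `a₀, a₁, a₂, a₃` and the least sum `c`, there are no
suitable labels of the `bᵢ`. The order `b₁, b₂, b₀, b₃` keeps the search small: the sums at `b₁` and
at `b₂` involve both the smallest and the largest `a`-label. -/
def searchB (c w x y z : ℕ) : Bool :=
  tryAll (window c) (three w y z) (2 ^ w ||| three x y z) fun b₁ =>
  tryAll (window c ||| three w y z <<< b₁) (three w x z) (2 ^ w ||| three x y z) fun b₂ =>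
  tryAll (window c ||| three w y z <<< b₁ ||| three w x z <<< b₂) (three x y z)
    (2 ^ w ||| three x y z) fun b₀ =>
  tryAll (window c ||| three w y z <<< b₁ ||| three w x z <<< b₂ ||| three x y z <<< b₀)
    (three w x y) (2 ^ w ||| three x y z) fun _ => false

/-- `true` when `k n` is, for every `n` in `[l, 12]`. -/
def allFrom (l : ℕ) (k : ℕ → Bool) : Bool :=
  [1, 2, 3, 4, 5, 6, 7, 8, 9, 10, 11, 12].all fun n => bif Nat.ble l n then k n else true

/-- `true` when the whole search finds no labelling. -/
def search : Bool :=
  allFrom 1 fun w => allFrom (w + 1) fun x => allFrom (x + 1) fun y => allFrom (y + 1) fun z =>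
    [0, 1, 2, 3, 4, 5, 6, 7].all fun c => searchB c w x y z

theorem search_eq_true : search = true := by decide +kernel

theorem testBit_three_shiftLeft {x y z b n : ℕ} (h : (three x y z <<< b).testBit n = true) :
    n = x + b ∨ n = y + b ∨ n = z + b := by
  simp only [three, Nat.testBit_shiftLeft, Nat.testBit_or, Nat.testBit_two_pow, Bool.and_eq_true,
    Bool.or_eq_true, decide_eq_true_eq] at h
  omega

theorem testBit_window {c n : ℕ} (h : (window c).testBit n = true) : n < c ∨ c + 11 < n := by
  simp only [window, Nat.testBit_or, Nat.testBit_shiftLeft, Nat.testBit_two_pow_sub_one,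
    Bool.and_eq_true, Bool.or_eq_true, decide_eq_true_eq] at h
  omega

theorem mem_labels {n : ℕ} (h : n ∈ Set.Icc 1 12) :
    n ∈ [1, 2, 3, 4, 5, 6, 7, 8, 9, 10, 11, 12] := by
  obtain ⟨h₁, h₂⟩ := h
  interval_cases n <;> simp

theorem allFrom_apply {l n : ℕ} {k : ℕ → Bool} (h : allFrom l k = true) (hn : n ∈ Set.Icc 1 12)
    (hl : l ≤ n) : k n = true := by
  have := List.all_eq_true.1 h n (mem_labels hn)
  simpa [Nat.ble_eq_true_of_le hl] using this

/-- A successful `tryAll` applies to every label `b` that is admissible, i.e. none of whose sums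
is forbidden and which is not itself forbidden. -/
theorem tryAll_apply {u m M b : ℕ} {k : ℕ → Bool} (h : tryAll u m M k = true)
    (hb : b ∈ Set.Icc 1 12)
    (hu : ∀ n, (m <<< b).testBit n = true → u.testBit n = true → False)
    (hM : M.testBit b = false) : k b = true := by
  have key := List.all_eq_true.1 h b (mem_labels hb)
  have h₁ : (m <<< b) &&& u = 0 := by
    apply Nat.eq_of_testBit_eq
    intro n
    rw [Nat.testBit_and, Nat.zero_testBit, Bool.and_eq_false_iff]
    by_contra! hcon
    exact hu n (by simpa using hcon.1) (by simpa using hcon.2)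
  have h₂ : (M >>> b) % 2 = 0 := by
    rw [Nat.testBit_eq_decide_div_mod_eq, decide_eq_false_iff_not] at hM
    rw [Nat.shiftRight_eq_div_pow]
    omega
  simpa [h₁, h₂] using key

/-- `a i` and `b j` are labels in `[1, 12]` of the two colour classes of the cube, with
`a i ~ b j` for `i ≠ j`, such that the edge sums are distinct elements of `[c, c + 11]`. Of the
injectivity of the labelling only what the search uses is recorded. -/
structure IsLabelling (c : ℕ) (a b : Fin 4 → ℕ) : Prop where
  a_mem : ∀ i, a i ∈ Set.Icc 1 12
  b_mem : ∀ i, b i ∈ Set.Icc 1 12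
  a_inj : Function.Injective a
  ne : ∀ i j, b i ≠ a j
  sum_mem : ∀ i j, i ≠ j → a i + b j ∈ Set.Icc c (c + 11)
  sum_inj : ∀ i j k l, i ≠ j → k ≠ l → a i + b j = a k + b l → j = l

theorem not_isLabelling_of_strictMono {c : ℕ} {a b : Fin 4 → ℕ} (hc : c ≤ 7) (ha : StrictMono a)
    (h : IsLabelling c a b) : False := by
  have s := search_eq_true
  have s := allFrom_apply s (h.a_mem 0) (h.a_mem 0).1
  have s := allFrom_apply s (h.a_mem 1) (ha (by decide : (0 : Fin 4) < 1))
  have s := allFrom_apply s (h.a_mem 2) (ha (by decide : (1 : Fin 4) < 2))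
  have s := allFrom_apply s (h.a_mem 3) (ha (by decide : (2 : Fin 4) < 3))
  have s := List.all_eq_true.1 s c (by interval_cases c <;> simp)
  have hM : ∀ i, (2 ^ a 0 ||| three (a 1) (a 2) (a 3)).testBit (b i) = false := by
    intro i
    simp only [three, Nat.testBit_or, Nat.testBit_two_pow, Bool.or_eq_false_iff,
      decide_eq_false_iff_not]
    exact ⟨(h.ne i 0).symm, (h.ne i 1).symm, (h.ne i 2).symm, (h.ne i 3).symm⟩
  have hw : ∀ i j, i ≠ j → (window c).testBit (a i + b j) = true → False := by
    intro i j hij hbit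
    have h₁ := testBit_window hbit
    have h₂ := h.sum_mem i j hij
    rw [Set.mem_Icc] at h₂
    omega
  -- The sums at `b j` do not recur at another vertex `b q`.
  have hs : ∀ i j k l, i ≠ j → k ≠ j → l ≠ j → ∀ p q, p ≠ q → q ≠ j →
      (three (a i) (a k) (a l) <<< b j).testBit (a p + b q) = true → False := by
    intro i j k l hi hk hl p q hpq hqj hbit
    rcases testBit_three_shiftLeft hbit with e | e | e
    · exact hqj (h.sum_inj _ _ _ _ hpq hi e)
    · exact hqj (h.sum_inj _ _ _ _ hpq hk e)
    · exact hqj (h.sum_inj _ _ _ _ hpq hl e)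
  have s := tryAll_apply s (h.b_mem 1) (by
    intro n hn hu
    rcases testBit_three_shiftLeft hn with rfl | rfl | rfl
    all_goals exact hw _ _ (by decide) hu) (hM 1)
  have s := tryAll_apply s (h.b_mem 2) (by
    intro n hn hu
    rw [Nat.testBit_or, Bool.or_eq_true] at hu
    rcases testBit_three_shiftLeft hn with rfl | rfl | rfl <;> rcases hu with hu | hu
    all_goals first
      | exact hw _ _ (by decide) hu
      | exact hs _ _ _ _ (by decide) (by decide) (by decide) _ _ (by decide) (by decide) hu) (hM 2)
  have s := tryAll_apply s (h.b_mem 0) (by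
    intro n hn hu
    rw [Nat.testBit_or, Nat.testBit_or, Bool.or_eq_true, Bool.or_eq_true] at hu
    rcases testBit_three_shiftLeft hn with rfl | rfl | rfl <;> rcases hu with (hu | hu) | hu
    all_goals first
      | exact hw _ _ (by decide) hu
      | exact hs _ _ _ _ (by decide) (by decide) (by decide) _ _ (by decide) (by decide) hu) (hM 0)
  have s := tryAll_apply s (h.b_mem 3) (by
    intro n hn hu
    rw [Nat.testBit_or, Nat.testBit_or, Nat.testBit_or, Bool.or_eq_true, Bool.or_eq_true,
      Bool.or_eq_true] at hu
    rcases testBit_three_shiftLeft hn with rfl | rfl | rfl <;>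
      rcases hu with ((hu | hu) | hu) | hu
    all_goals first
      | exact hw _ _ (by decide) hu
      | exact hs _ _ _ _ (by decide) (by decide) (by decide) _ _ (by decide) (by decide) hu) (hM 3)
  exact Bool.false_ne_true s

theorem IsLabelling.comp_perm {c : ℕ} {a b : Fin 4 → ℕ} (h : IsLabelling c a b)
    (σ : Equiv.Perm (Fin 4)) : IsLabelling c (a ∘ σ) (b ∘ σ) where
  a_mem _ := h.a_mem _
  b_mem _ := h.b_mem _
  a_inj := h.a_inj.comp σ.injective
  ne _ _ := h.ne _ _
  sum_mem _ _ hij := h.sum_mem _ _ (σ.injective.ne hij)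
  sum_inj _ _ _ _ hij hkl e :=
    σ.injective (h.sum_inj _ _ _ _ (σ.injective.ne hij) (σ.injective.ne hkl) e)

theorem not_isLabelling_of_le {c : ℕ} {a b : Fin 4 → ℕ} (hc : c ≤ 7)
    (h : IsLabelling c a b) : False :=
  not_isLabelling_of_strictMono hc
    ((Tuple.monotone_sort a).strictMono_of_injective (h.a_inj.comp (Tuple.sort a).injective))
    (h.comp_perm (Tuple.sort a))

/-- The complementary labelling, with every label `n` replaced by `13 - n`. -/
theorem IsLabelling.compl {c : ℕ} {a b : Fin 4 → ℕ} (hc : c ≤ 15) (h : IsLabelling c a b) :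
    IsLabelling (15 - c) (fun i => 13 - a i) (fun i => 13 - b i) := by
  have ha : ∀ i, 1 ≤ a i ∧ a i ≤ 12 := h.a_mem
  have hb : ∀ i, 1 ≤ b i ∧ b i ≤ 12 := h.b_mem
  refine ⟨?_, ?_, ?_, ?_, ?_, ?_⟩
  · intro i
    have := ha i
    simp only [Set.mem_Icc]
    omega
  · intro i
    have := hb i
    simp only [Set.mem_Icc]
    omega
  · intro i j e
    have := ha i
    have := ha j
    change 13 - a i = 13 - a j at e
    exact h.a_inj (by omega)
  · intro i j e
    have := hb i
    have := ha j
    exact h.ne i j (by omega)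
  · intro i j hij
    have := h.sum_mem i j hij
    have := ha i
    have := hb j
    simp only [Set.mem_Icc] at *
    omega
  · intro i j k l hij hkl e
    have := ha i
    have := hb j
    have := ha k
    have := hb l
    exact h.sum_inj i j k l hij hkl (by omega)

theorem not_isLabelling {c : ℕ} {a b : Fin 4 → ℕ} (hc : c ≤ 15) (h : IsLabelling c a b) :
    False := by
  rcases Nat.lt_or_ge 7 c with h7 | h7
  · exact not_isLabelling_of_le (by omega) (h.compl hc)
  · exact not_isLabelling_of_le h7 h

/-- One colour class of the cube `C₄ □ K₂`. -/
def va : Fin 4 → Fin 4 × Fin 2 := ![(0, 0), (1, 1), (2, 0), (3, 1)]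

/-- The other colour class; `vb i` is the antipode of `va i`. -/
def vb : Fin 4 → Fin 4 × Fin 2 := ![(2, 1), (3, 0), (0, 1), (1, 0)]

theorem prism_adj_iff (u v : Fin 4 × Fin 2) : (prism 4).Adj u v ↔
    ((u.1 - v.1 = 1 ∨ v.1 - u.1 = 1) ∧ u.2 = v.2) ∨ (u.2 ≠ v.2 ∧ u.1 = v.1) := by
  simp [prism, SimpleGraph.boxProd_adj, SimpleGraph.cycleGraph_adj]

instance : DecidableRel (prism 4).Adj := fun u v => decidable_of_iff' _ (prism_adj_iff u v)

theorem adj_va_vb : ∀ i j, i ≠ j → (prism 4).Adj (va i) (vb j) := by decide +kernel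

theorem va_injective : Function.Injective va := by decide +kernel

theorem vb_ne_va : ∀ i j, vb i ≠ va j := by decide +kernel

theorem edge_injective : ∀ i j k l, s(va i, vb j) = s(va k, vb l) → j = l := by decide +kernel

/-- A labelling of the cube into `[1, 13]` with edge sums `6, …, 17`: on the two colour classes
`va`, `vb` it takes the values `1, 2, 3, 4` and `7, 13, 11, 5`. -/
def label (v : Fin 4 × Fin 2) : ℕ := ![![1, 11], ![5, 2], ![3, 7], ![13, 4]] v.1 v.2

end PrismFour

open PrismFour

/-- The prism `D₄ = C₄ □ K₂` (the 3-cube `Q₃`) satisfies `μₛ(D₄) = 5`: there is an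
injection `f : V(D₄) → [1, 13]` whose 12 edge sums are pairwise distinct and form 12
consecutive integers, but no injection into `[1, 12]` has this property. -/
theorem prism_four_deficiency_eq_five :
    (∃ f : Fin 4 × Fin 2 → ℕ, Function.Injective f ∧
      (∀ v, f v ∈ Set.Icc 1 13) ∧
      ∃ c : ℕ, Set.BijOn (edgeSum f) (prism 4).edgeSet (Set.Icc c (c + 11))) ∧
    ¬ (∃ f : Fin 4 × Fin 2 → ℕ, Function.Injective f ∧
      (∀ v, f v ∈ Set.Icc 1 12) ∧
      ∃ c : ℕ, Set.BijOn (edgeSum f) (prism 4).edgeSet (Set.Icc c (c + 11))) := by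
  constructor
  · refine ⟨label, by decide +kernel, ?_, 6, ?_, ?_, ?_⟩
    · simp only [Set.mem_Icc]
      decide +kernel
    · intro e
      induction e using Sym2.ind with | _ u v
      rw [SimpleGraph.mem_edgeSet, Set.mem_Icc]
      change _ → 6 ≤ label u + label v ∧ label u + label v ≤ 17
      revert u v
      decide +kernel
    · intro e he e' he'
      induction e using Sym2.ind with | _ u v
      induction e' using Sym2.ind with | _ u' v'
      rw [SimpleGraph.mem_edgeSet] at he he'
      change label u + label v = label u' + label v' → _
      have key : ∀ u v u' v', (prism 4).Adj u v ∧ (prism 4).Adj u' v' ∧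
          label u + label v = label u' + label v' → u = u' ∧ v = v' ∨ u = v' ∧ v = u' := by
        decide +kernel
      exact fun h => Sym2.eq_iff.2 (key u v u' v' ⟨he, he', h⟩)
    · intro n hn
      have key : ∀ m : Fin 12, ∃ u v, (prism 4).Adj u v ∧ label u + label v = 6 + m.val := by
        decide +kernel
      rw [Set.mem_Icc] at hn
      obtain ⟨u, v, huv, e⟩ := key ⟨n - 6, by omega⟩
      refine ⟨s(u, v), huv, ?_⟩
      change label u + label v = n
      rw [e]
      simp only
      omega
  · rintro ⟨f, hf, hmem, c, hbij⟩
    have hc : c ≤ 15 := by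
      obtain ⟨e', -, he'⟩ := hbij.surjOn (Set.right_mem_Icc.2 (Nat.le_add_right c 11))
      induction e' using Sym2.ind with | _ u v
      change f u + f v = c + 11 at he'
      have hu := (hmem u).2
      have hv := (hmem v).2
      omega
    refine not_isLabelling hc (a := f ∘ va) (b := f ∘ vb)
      ⟨fun i => hmem _, fun i => hmem _, hf.comp va_injective, fun i j => hf.ne (vb_ne_va i j),
        fun i j hij => hbij.mapsTo (x := s(va i, vb j)) (adj_va_vb i j hij),
        fun i j k l hij hkl e => ?_⟩
    exact edge_injective i j k l
      (hbij.injOn (x₁ := s(va i, vb j)) (x₂ := s(va k, vb l)) (adj_va_vb i j hij)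
        (adj_va_vb k l hkl) e)
end
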